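/- arXiv:1509.08318 — 2 statements merged into one kernel-verified Lean document; each statement's English description precedes it below -/
import Mathlib

section
/- There exists a partition of unity f₀, f_{1/2}, f₁ of C([0,1]) (continuous functions [0,1] → [0,1] with f₀ + f_{1/2} + f₁ = 1) with f_{1/2}(t) = 0 for every t outside (1/3, 2/3), such that the following holds. Let A and E be unital C*-algebras, θ : C([0,1],ℂ) → E a unital *-homomorphism, ν₀, ν₁ : C₀((0,1),A) → E *-homomorphisms compatible with θ, and v ∈ E a unitary. Then there exists a completely positive map ρ : C₀((0,1),A) → M₂(E) such that: (i) for every x ∈ C₀((0,1),A) with x(t) = 0 for all t ∉ (0, 1/3), ρ(x) is the matrix with ν₀(x) in the (1,1) entry and 0 elsewhere; (ii) for every x with x(t) = 0 for all t ∉ (2/3, 1), ρ(x) is the matrix with ν₁(x) in the (1,1) entry and 0 elsewhere; (iii) for every tracial state τ on E with τ∘ν₀ = τ∘ν₁, one has (τ ⊗ Tr₂)(ρ(x)) = τ(ν₀(x)) for all x ∈ C₀((0,1),A); (iv) for all x ∈ C₀((0,1),A) and h ∈ C([0,1],ℂ), ‖ρ(h·x) − θ^{⊕2}(h)ρ(x)‖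 ≤ (‖[θ(f_{1/2}), v]‖·‖h‖ + ‖[θ(h·f_{1/2}), v]‖)·‖x‖; (v) for all x, y ∈ C₀((0,1),A), ‖ρ(xy) − ρ(x)ρ(y)‖ ≤ (7‖[v, θ(f_{1/2})]‖ + 2‖[v, θ(f₀·f_{1/2})]‖ + 5‖[v, θ(f_{1/2}·f₁)]‖)·‖x‖·‖y‖ + (‖ν₁((f_{1/2}·f₁)·x)v − vν₀((f_{1/2}·f₁)·x)‖ + ‖ν₁(f_{1/2}·x)v − vν₀(f_{1/2}·x)‖)·‖y‖. -/
open scoped ComplexOrder unitInterval ENNReal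

set_option synthInstance.maxHeartbeats 1000000
set_option maxHeartbeats 1000000

noncomputable section

/-- The suspension `C₀((0,1),A)`, realised as the non-unital star subalgebra of `C([0,1],A)`
consisting of the functions vanishing at both endpoints. -/
def susp (A : Type) [CStarAlgebra A] : NonUnitalStarSubalgebra ℂ C(I, A) where
  carrier := {x | x 0 = 0 ∧ x 1 = 0}
  add_mem' hx hy := by
    constructor <;> simp [ContinuousMap.add_apply, hx.1, hx.2, hy.1, hy.2]
  mul_mem' hx hy := by
    constructor <;> simp [ContinuousMap.mul_apply, hx.1, hx.2, hy.1, hy.2]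
  smul_mem' c x hx := by
    constructor <;> simp [ContinuousMap.smul_apply, hx.1, hx.2]
  zero_mem' := by constructor <;> simp
  star_mem' hx := by
    constructor <;> simp [ContinuousMap.star_apply, hx.1, hx.2]

/-- The pointwise product `h·x` of a scalar-valued continuous function on `[0,1]` with an element
of the suspension, which again lies in the suspension. -/
def hsmul {A : Type} [CStarAlgebra A] (h : C(I, ℂ)) (x : susp A) : susp A :=
  ⟨h • (x : C(I, A)), by
    have h0 : (x : C(I, A)) 0 = 0 ∧ (x : C(I, A)) 1 = 0 := x.2
    constructor <;> simp [ContinuousMap.smul_apply', h0.1, h0.2]⟩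

/-- A real-valued continuous function on `[0,1]`, regarded as a complex-valued one. -/
def ofRealCM (f : C(I, ℝ)) : C(I, ℂ) :=
  ⟨fun t => (f t : ℂ), Complex.continuous_ofReal.comp f.continuous⟩

/-- A *-homomorphism `ν : C₀((0,1),A) → E` is compatible with a unital *-homomorphism
`θ : C([0,1]) → E` if `ν(h·x) = θ(h)ν(x) = ν(x)θ(h)` for all `h` and `x`. -/
def Compatible {A E : Type} [CStarAlgebra A] [CStarAlgebra E]
    (θ : C(I, ℂ) →⋆ₐ[ℂ] E) (ν : susp A →⋆ₙₐ[ℂ] E) : Prop :=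
  ∀ (h : C(I, ℂ)) (x : susp A), ν (hsmul h x) = θ h * ν x ∧ ν (hsmul h x) = ν x * θ h

/-- Tracial states on a unital C*-algebra. -/
def IsTracialState {B : Type} [CStarAlgebra B] (τ : B →L[ℂ] ℂ) : Prop :=
  τ 1 = 1 ∧ (∀ b : B, (∃ y, b = star y * y) → 0 ≤ τ b) ∧ ∀ a b : B, τ (a * b) = τ (b * a)

/-- The C*-norm on a complex star algebra (such as a matrix algebra over a C*-algebra),
defined via the spectral radius; this recovers the unique C*-norm when one exists. -/
def cstarNorm {B : Type} [Ring B] [StarRing B] [Algebra ℂ B] (a : B) : ℝ :=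
  Real.sqrt (spectralRadius ℂ (star a * a)).toReal

/-- Complete positivity of a linear map between complex star algebras: positive matrices
(i.e. those of the form `y* y`) are sent to positive matrices, at every matrix level. -/
def IsCompletelyPositive {B C : Type} [NonUnitalRing B] [StarRing B] [Module ℂ B]
    [NonUnitalRing C] [StarRing C] [Module ℂ C] (φ : B →ₗ[ℂ] C) : Prop :=
  ∀ (n : ℕ) (M : Matrix (Fin n) (Fin n) B),
    (∃ y : Matrix (Fin n) (Fin n) B, M = star y * y) →
    ∃ z : Matrix (Fin n) (Fin n) C, M.map (fun b => φ b) = star z * z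

/-! The map is a compression `ρ(x) = U S (ν₀(x) ⊕ ν₁(x)) S* U*`, hence completely positive. With
`f = θ(f_{1/2})` and commuting self-adjoint `a`, `d` in the range of `θ`, living on the supports of
`f₀` and `f₁` and such that `f² + a² + d² = 1` and `a d = 0`, the matrix `S` has rows `(v f, d)` and
`(a, 0)`. It carries `ν₀` into the lower right corner near `0` and `ν₁` into the upper left corner
near `1`; the unitary `U` is a rotation in the range of `θ` that puts both of them into the upper
left corner.

The diagonal of `S*S` is `(f² + a², d²)`, so a tracial state that does not distinguish `ν₀` from
`ν₁` does not distinguish `ρ` from `ν₀` either. Multiplicativity fails by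
`S (ν₀(x) ⊕ ν₁(x)) (1 - S*S) (ν₀(y) ⊕ ν₁(y)) S*`. Because `f`, `a` and `d` commute with the images
of `ν₀` and `ν₁`, the entries of this matrix consist of commutators of `v` with `f` and `d² f` and
of the intertwining defect `ν₁(f_{1/2} x) v - v ν₀(f_{1/2} x)`. -/

section Matrix

theorem diagonal_const_fin_two {R : Type} [Zero R] (a : R) :
    Matrix.diagonal (fun _ : Fin 2 => a) = !![a, 0; 0, a] := by
  ext i j; fin_cases i <;> fin_cases j <;> rfl

theorem star_matrix_fin_two {R : Type} [Star R] (a b c d : R) :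
    star !![a, b; c, d] = !![star a, star c; star b, star d] := by
  ext i j; fin_cases i <;> fin_cases j <;> rfl

variable {n B R : Type} [Fintype n] [DecidableEq n] [NonUnitalNonAssocSemiring B] [Star B]
  [DistribMulAction ℂ B] [Semiring R] [StarRing R] [Module ℂ R]

/-- The diagonal *-homomorphism `x ↦ ⨁ᵢ νᵢ(x)` into a matrix algebra. -/
def diagonalHom (ν : n → B →⋆ₙₐ[ℂ] R) : B →⋆ₙₐ[ℂ] Matrix n n R where
  toFun x := Matrix.diagonal fun i => ν i x
  map_smul' c x := by simp [← Matrix.diagonal_smul, Pi.smul_def]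
  map_zero' := by simp
  map_add' x y := by simp
  map_mul' x y := by simp
  map_star' x := by
    simp [Matrix.star_eq_conjTranspose, Matrix.diagonal_conjTranspose, Pi.star_def, map_star]

theorem diagonalHom_apply_fin_two (ν₀ ν₁ : B →⋆ₙₐ[ℂ] R) (x : B) :
    diagonalHom ![ν₀, ν₁] x = !![ν₀ x, 0; 0, ν₁ x] := by
  ext i j; fin_cases i <;> fin_cases j <;> rfl

end Matrix

section CStarNorm

attribute [local instance] CStarAlgebra.spectralOrder CStarAlgebra.spectralOrderedRing

theorem cstarNorm_eq_norm {B : Type} [CStarAlgebra B] (b : B) : cstarNorm b = ‖b‖ := by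
  rw [cstarNorm, (IsSelfAdjoint.star_mul_self b).spectralRadius_eq_nnnorm, ENNReal.coe_toReal,
    coe_nnnorm, CStarRing.norm_star_mul_self, Real.sqrt_mul_self (norm_nonneg b)]

variable {n E : Type} [Fintype n] [DecidableEq n] [CStarAlgebra E]

-- `CStarMatrix n n E` and `Matrix n n E` carry definitionally equal star algebra structures.
theorem cstarNorm_eq_norm_ofMatrix (M : Matrix n n E) :
    cstarNorm M = ‖CStarMatrix.ofMatrix M‖ :=
  cstarNorm_eq_norm (CStarMatrix.ofMatrix M)

theorem cstarNorm_nonneg (M : Matrix n n E) : 0 ≤ cstarNorm M :=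
  Real.sqrt_nonneg _

theorem cstarNorm_add_le (M N : Matrix n n E) :
    cstarNorm (M + N) ≤ cstarNorm M + cstarNorm N := by
  simp only [cstarNorm_eq_norm_ofMatrix]
  exact norm_add_le (CStarMatrix.ofMatrix M) (CStarMatrix.ofMatrix N)

theorem cstarNorm_mul_le (M N : Matrix n n E) :
    cstarNorm (M * N) ≤ cstarNorm M * cstarNorm N := by
  simp only [cstarNorm_eq_norm_ofMatrix]
  exact norm_mul_le (CStarMatrix.ofMatrix M) (CStarMatrix.ofMatrix N)

theorem cstarNorm_star (M : Matrix n n E) : cstarNorm (star M) = cstarNorm M := by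
  simp only [cstarNorm_eq_norm_ofMatrix]
  exact norm_star (CStarMatrix.ofMatrix M)

theorem cstarNorm_star_mul_self (M : Matrix n n E) : cstarNorm (star M * M) = cstarNorm M ^ 2 := by
  simp only [cstarNorm_eq_norm_ofMatrix, sq]
  exact CStarRing.norm_star_mul_self (x := CStarMatrix.ofMatrix M)

theorem cstarNorm_mul_of_mem_unitary (M : Matrix n n E) {U : Matrix n n E}
    (hU : U ∈ unitary (Matrix n n E)) : cstarNorm (M * U) = cstarNorm M := by
  simp only [cstarNorm_eq_norm_ofMatrix]
  exact CStarRing.norm_mul_mem_unitary (CStarMatrix.ofMatrix M) (U := CStarMatrix.ofMatrix U) hU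

theorem cstarNorm_conj_of_mem_unitary (M : Matrix n n E) {U : Matrix n n E}
    (hU : U ∈ unitary (Matrix n n E)) : cstarNorm (U * M * star U) = cstarNorm M := by
  rw [cstarNorm_mul_of_mem_unitary _ (Unitary.star_mem hU), ← cstarNorm_star, star_mul,
    cstarNorm_mul_of_mem_unitary _ (Unitary.star_mem hU), cstarNorm_star]

theorem cstarNorm_diagonal (z : n → E) : cstarNorm (Matrix.diagonal z) = ‖z‖ := by
  rw [cstarNorm_eq_norm_ofMatrix]
  let φ : (n → E) →⋆ₙₐ[ℂ] CStarMatrix n n E :=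
    diagonalHom fun i => Pi.evalNonUnitalStarAlgHom ℂ (fun _ : n => E) i
  have norm_φ : ‖φ z‖ = ‖z‖ :=
    NonUnitalStarAlgHom.norm_map (B := CStarMatrix n n E) φ Matrix.diagonal_injective z
  exact norm_φ

theorem cstarNorm_diagonal_fin_two (a b : E) : cstarNorm !![a, 0; 0, b] = max ‖a‖ ‖b‖ := by
  rw [← Matrix.diagonal_vec2, cstarNorm_diagonal]
  apply le_antisymm
  · refine (pi_norm_le_iff_of_nonneg (by positivity)).2 (Fin.forall_fin_two.2 ⟨?_, ?_⟩) <;> simp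
  · exact max_le (norm_le_pi_norm ![a, b] 0) (norm_le_pi_norm ![a, b] 1)

theorem cstarNorm_matrix_fin_two_le (a b c d : E) :
    cstarNorm !![a, b; c, d] ≤ max ‖a‖ ‖d‖ + max ‖b‖ ‖c‖ := by
  have swap_mem : (!![0, 1; 1, 0] : Matrix (Fin 2) (Fin 2) E) ∈ unitary _ := by
    simp [Unitary.mem_iff, star_matrix_fin_two, Matrix.one_fin_two]
  calc cstarNorm !![a, b; c, d]
      = cstarNorm (!![a, 0; 0, d] + !![b, 0; 0, c] * !![0, 1; 1, 0]) := by simp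
    _ ≤ cstarNorm !![a, 0; 0, d] + cstarNorm (!![b, 0; 0, c] * !![0, 1; 1, 0]) :=
        cstarNorm_add_le _ _
    _ = max ‖a‖ ‖d‖ + max ‖b‖ ‖c‖ := by
        rw [cstarNorm_mul_of_mem_unitary _ swap_mem, cstarNorm_diagonal_fin_two,
          cstarNorm_diagonal_fin_two]

theorem sq_cstarNorm_column (a b : E) :
    cstarNorm !![a, 0; b, 0] ^ 2 = ‖star a * a + star b * b‖ := by
  rw [← cstarNorm_star_mul_self, star_matrix_fin_two, Matrix.mul_fin_two]
  simp [cstarNorm_diagonal_fin_two]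

end CStarNorm

theorem star_mul_self_of_mem_unitary_mul {C : Type} [Ring C] [StarRing C] {U : C}
    (hU : U ∈ unitary C) (S : C) : star (U * S) * (U * S) = star S * S := by
  rw [star_mul, mul_assoc, ← mul_assoc (star U), Unitary.star_mul_self_of_mem hU, one_mul]

section Stinespring

variable {B C : Type} [NonUnitalRing B] [StarRing B] [Module ℂ B]
  [Ring C] [StarRing C] [Algebra ℂ C]

/-- The compression `x ↦ T π(x) T*` of a *-homomorphism `π`, the Stinespring form of a
completely positive map. -/
def stinespringMap (T : C) (π : B →⋆ₙₐ[ℂ] C) : B →ₗ[ℂ] C where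
  toFun x := T * π x * star T
  map_add' x y := by rw [map_add, mul_add, add_mul]
  map_smul' c x := by rw [map_smul, RingHom.id_apply, mul_smul_comm, smul_mul_assoc]

theorem stinespringMap_apply (T : C) (π : B →⋆ₙₐ[ℂ] C) (x : B) :
    stinespringMap T π x = T * π x * star T :=
  rfl

theorem isCompletelyPositive_stinespringMap (T : C) (π : B →⋆ₙₐ[ℂ] C) :
    IsCompletelyPositive (stinespringMap T π) := by
  rintro n M ⟨y, rfl⟩
  refine ⟨Matrix.of fun k j => π (y k j) * star T, ?_⟩
  ext1 i j
  simp [stinespringMap_apply, Matrix.mul_apply, Matrix.star_apply, map_sum, Finset.mul_sum,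
    Finset.sum_mul, mul_assoc, map_star]

theorem stinespringMap_mul_sub (T : C) (π : B →⋆ₙₐ[ℂ] C) (x y : B) :
    stinespringMap T π (x * y) - stinespringMap T π x * stinespringMap T π y =
      T * π x * (1 - star T * T) * π y * star T := by
  simp only [stinespringMap_apply, map_mul]
  noncomm_ring

end Stinespring

section Trace

variable {n B : Type} [Fintype n] [CStarAlgebra B]

theorem IsTracialState.map_trace_mul_comm {τ : B →L[ℂ] ℂ} (hτ : IsTracialState τ)
    (M N : Matrix n n B) : τ (M * N).trace = τ (N * M).trace := by
  simp only [Matrix.trace, Matrix.diag_apply, Matrix.mul_apply, map_sum]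
  rw [Finset.sum_comm]
  simp only [hτ.2.2]

end Trace

section Norm

variable {E : Type} [CStarAlgebra E]

theorem norm_star_mul_self_add_le_one {b c e : E}
    (h : star b * b + star c * c + star e * e = 1) : ‖star b * b + star c * c‖ ≤ 1 := by
  let _ := CStarAlgebra.spectralOrder E
  let _ := CStarAlgebra.spectralOrderedRing E
  have nonneg : 0 ≤ star b * b + star c * c :=
    add_nonneg (star_mul_self_nonneg b) (star_mul_self_nonneg c)
  rw [CStarAlgebra.norm_le_one_iff_of_nonneg _ nonneg, ← h]
  exact le_add_of_nonneg_right (star_mul_self_nonneg e)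

theorem norm_le_one_of_star_mul_self_add_eq_one {b c e : E}
    (h : star b * b + star c * c + star e * e = 1) : ‖b‖ ≤ 1 := by
  let _ := CStarAlgebra.spectralOrder E
  let _ := CStarAlgebra.spectralOrderedRing E
  have norm_sq_le : ‖star b * b‖ ≤ ‖star b * b + star c * c‖ :=
    CStarAlgebra.norm_le_norm_of_nonneg_of_le (star_mul_self_nonneg b)
      (le_add_of_nonneg_right (star_mul_self_nonneg c))
  rw [← sq_le_one_iff₀ (norm_nonneg b), sq, ← CStarRing.norm_star_mul_self]
  exact norm_sq_le.trans (norm_star_mul_self_add_le_one h)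

theorem norm_le_one_of_mem_unitary {v : E} (hv : v ∈ unitary E) : ‖v‖ ≤ 1 := by
  nontriviality E
  exact (CStarRing.norm_of_mem_unitary hv).le

theorem norm_lie_star_of_mem_unitary {v : E} (hv : v ∈ unitary E) (b : E) :
    ‖⁅b, star v⁆‖ = ‖⁅v, b⁆‖ := by
  have conj : ⁅b, star v⁆ = star v * ⁅v, b⁆ * star v := by
    simp only [Ring.lie_def, mul_sub, sub_mul, ← mul_assoc, Unitary.star_mul_self_of_mem hv,
      one_mul]
    simp only [mul_assoc, Unitary.mul_star_self_of_mem hv, mul_one]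
  rw [conj, CStarRing.norm_mul_mem_unitary _ (Unitary.star_mem hv),
    CStarRing.norm_mem_unitary_mul _ (Unitary.star_mem hv)]

end Norm

/-- Three commuting self-adjoint elements with `f² + a² + d² = 1` and `a d = 0`: the amplitudes
with which the middle, left and right parts of the interval enter the patching matrix. -/
structure IsPatchingTriple {R : Type} [Ring R] [StarRing R] (f a d : R) : Prop where
  isSelfAdjoint_mid : IsSelfAdjoint f
  isSelfAdjoint_left : IsSelfAdjoint a
  isSelfAdjoint_right : IsSelfAdjoint d
  commute_mid_left : Commute f a
  commute_mid_right : Commute f d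
  left_mul_right : a * d = 0
  sum_sq : f * f + a * a + d * d = 1

/-- The matrix `S` compressing `ν₀ ⊕ ν₁`; its upper left corner transports the middle part of `ν₀`
to that of `ν₁` by `v`. -/
def patchMatrix {R : Type} [Ring R] (v f a d : R) : Matrix (Fin 2) (Fin 2) R :=
  !![v * f, d; a, 0]

/-- The rotation matrix with rows `(p, q)` and `(-q, p)`. -/
def rotationMatrix {R : Type} [Ring R] (p q : R) : Matrix (Fin 2) (Fin 2) R :=
  !![p, q; -q, p]

theorem commute_diagonal_rotationMatrix {R : Type} [Ring R] {p q h : R} (hp : Commute h p)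
    (hq : Commute h q) : Commute (Matrix.diagonal fun _ : Fin 2 => h) (rotationMatrix p q) := by
  ext i j
  fin_cases i <;> fin_cases j <;> simp [rotationMatrix, hp.eq, hq.eq]

theorem rotationMatrix_mem_unitary {R : Type} [Ring R] [StarRing R] {p q : R} (hp : IsSelfAdjoint p)
    (hq : IsSelfAdjoint q) (hpq : Commute p q) (h : p * p + q * q = 1) :
    rotationMatrix p q ∈ unitary (Matrix (Fin 2) (Fin 2) R) := by
  have h' : q * q + p * p = 1 := by rw [add_comm, h]
  simp [Unitary.mem_iff, rotationMatrix, star_matrix_fin_two, Matrix.one_fin_two, hp.star_eq,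
    hq.star_eq, hpq.eq, h, h']

namespace IsPatchingTriple

section Ring

variable {R : Type} [Ring R] [StarRing R] {v f a d X₀ X₁ Y₀ Y₁ : R}

theorem right_mul_left (h : IsPatchingTriple f a d) : d * a = 0 := by
  simpa [h.isSelfAdjoint_left.star_eq, h.isSelfAdjoint_right.star_eq] using
    congrArg star h.left_mul_right

theorem sum_star_mul_self (h : IsPatchingTriple f a d) :
    star f * f + star a * a + star d * d = 1 := by
  rw [h.isSelfAdjoint_mid.star_eq, h.isSelfAdjoint_left.star_eq, h.isSelfAdjoint_right.star_eq,
    h.sum_sq]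

theorem one_sub_star_patchMatrix_mul_self (h : IsPatchingTriple f a d) (hv : v ∈ unitary R) :
    1 - star (patchMatrix v f a d) * patchMatrix v f a d =
      !![d * d, -(f * star v * d); -(d * v * f), f * f + a * a] := by
  have hv' : star v * (v * f) = f := by
    rw [← mul_assoc, Unitary.star_mul_self_of_mem hv, one_mul]
  have hd : 1 - (f * f + a * a) = d * d := by rw [← h.sum_sq]; abel
  have hfa : 1 - d * d = f * f + a * a := by rw [← h.sum_sq]; abel
  rw [patchMatrix, star_matrix_fin_two, Matrix.mul_fin_two, Matrix.one_fin_two]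
  simp [h.isSelfAdjoint_mid.star_eq, h.isSelfAdjoint_left.star_eq, h.isSelfAdjoint_right.star_eq,
    mul_assoc, hv', hd, hfa]

theorem patchMatrix_defect_eq (h : IsPatchingTriple f a d) (hv : v ∈ unitary R)
    (hX₀ : X₀ ∈ Set.centralizer {f, a, d}) (hX₁ : X₁ ∈ Set.centralizer {f, a, d})
    (hY₀ : Y₀ ∈ Set.centralizer {f, a, d}) (hY₁ : Y₁ ∈ Set.centralizer {f, a, d}) :
    patchMatrix v f a d * !![X₀, 0; 0, X₁] *
        (1 - star (patchMatrix v f a d) * patchMatrix v f a d) *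
        !![Y₀, 0; 0, Y₁] * star (patchMatrix v f a d) =
      !![(v * (d * d * f * X₀) - d * d * X₁ * v * f) * f * Y₀ * star v +
          (f * f * (d * d) * X₁ - v * f * f * X₀ * star v * (d * d)) * Y₁,
        -(X₁ * (d * d * v * f * a) * Y₀); -(X₀ * star (d * d * v * f * a) * Y₁), 0] := by
  have fX₀ : Commute X₀ f := (hX₀ f (by simp)).symm
  have aX₀ : Commute X₀ a := (hX₀ a (by simp)).symm
  have dX₀ : Commute X₀ d := (hX₀ d (by simp)).symm
  have fX₁ : Commute X₁ f := (hX₁ f (by simp)).symm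
  have aX₁ : Commute X₁ a := (hX₁ a (by simp)).symm
  have dX₁ : Commute X₁ d := (hX₁ d (by simp)).symm
  have fY₀ : Commute Y₀ f := (hY₀ f (by simp)).symm
  have aY₀ : Commute Y₀ a := (hY₀ a (by simp)).symm
  have dY₁ : Commute Y₁ d := (hY₁ d (by simp)).symm
  have da (z : R) : d * (a * z) = 0 := by rw [← mul_assoc, h.right_mul_left, zero_mul]
  have ad (z : R) : a * (d * z) = 0 := by rw [← mul_assoc, h.left_mul_right, zero_mul]
  rw [h.one_sub_star_patchMatrix_mul_self hv, patchMatrix, star_matrix_fin_two]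
  simp only [Matrix.mul_fin_two, star_mul, star_zero, h.isSelfAdjoint_mid.star_eq,
    h.isSelfAdjoint_left.star_eq, h.isSelfAdjoint_right.star_eq]
  simp only [mul_assoc, mul_add, add_mul, sub_mul, neg_mul, mul_neg, mul_zero, zero_mul, add_zero,
    zero_add, neg_zero, da, ad, fX₀.eq, fX₁.eq, aX₁.eq, dX₀.eq, aY₀.eq, dY₁.eq,
    h.commute_mid_left.eq, fX₀.left_comm, aX₀.left_comm, dX₀.left_comm, fX₁.left_comm,
    aX₁.left_comm, dX₁.left_comm, fY₀.left_comm, h.commute_mid_left.left_comm,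
    h.commute_mid_right.left_comm]
  simp only [EmbeddingLike.apply_eq_iff_eq, Matrix.vecCons_inj, and_true]
  abel

end Ring

variable {E : Type} [CStarAlgebra E] {v f a d X₀ X₁ Y₀ Y₁ : E}

theorem norm_mid_le (h : IsPatchingTriple f a d) : ‖f‖ ≤ 1 :=
  norm_le_one_of_star_mul_self_add_eq_one h.sum_star_mul_self

theorem norm_left_le (h : IsPatchingTriple f a d) : ‖a‖ ≤ 1 :=
  norm_le_one_of_star_mul_self_add_eq_one (c := f) (e := d) <| by
    rw [add_comm (star a * a), h.sum_star_mul_self]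

theorem norm_right_le (h : IsPatchingTriple f a d) : ‖d‖ ≤ 1 :=
  norm_le_one_of_star_mul_self_add_eq_one (c := f) (e := a) <| by
    rw [add_assoc, add_comm, h.sum_star_mul_self]

theorem norm_left_defect_le (h : IsPatchingTriple f a d)
    (hdf : ‖d * d * f‖ ≤ 1 / 2) (fX₀ : Commute X₀ f) (fX₁ : Commute X₁ f) {r : ℝ}
    (hX₀ : ‖X₀‖ ≤ r) (hX₁ : ‖X₁‖ ≤ r) :
    ‖(v * (d * d * f * X₀) - d * d * X₁ * v * f) * f‖ ≤
      (‖⁅v, d * d * f⁆‖ + 2 * ‖⁅v, f⁆‖) * r + ‖f * X₁ * v - v * (f * X₀)‖ / 2 := by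
  have expand : (v * (d * d * f * X₀) - d * d * X₁ * v * f) * f =
      ⁅v, d * d * f⁆ * X₀ * f - d * d * f * (f * X₁ * v - v * (f * X₀)) -
        d * d * X₁ * (f * ⁅v, f⁆ + ⁅v, f⁆ * f) := by
    simp only [Ring.lie_def, mul_assoc, mul_add, mul_sub, sub_mul, fX₀.eq, fX₁.left_comm]
    abel
  have hd := h.norm_right_le
  have hf := h.norm_mid_le
  rw [expand]
  refine (norm_sub_le_of_le (norm_sub_le_of_le
    (norm_mul_le_of_le (norm_mul_le_of_le le_rfl hX₀) hf) (norm_mul_le_of_le hdf le_rfl))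
    (norm_mul_le_of_le (norm_mul_le_of_le (norm_mul_le_of_le hd hd) hX₁)
      (norm_add_le_of_le (norm_mul_le_of_le hf le_rfl) (norm_mul_le_of_le le_rfl hf)))).trans_eq ?_
  ring

theorem norm_right_defect_le (h : IsPatchingTriple f a d) (hv : v ∈ unitary E)
    (hdf : ‖d * d * f‖ ≤ 1 / 2) (fX₀ : Commute X₀ f) (fX₁ : Commute X₁ f) (dX₁ : Commute X₁ d)
    {r : ℝ} (hX₀ : ‖X₀‖ ≤ r) :
    ‖f * f * (d * d) * X₁ - v * f * f * X₀ * star v * (d * d)‖ ≤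
      ‖⁅v, f⁆‖ * r + ‖f * X₁ * v - v * (f * X₀)‖ / 2 := by
  have expand : f * f * (d * d) * X₁ - v * f * f * X₀ * star v * (d * d) =
      (f * X₁ * v - v * (f * X₀)) * star v * (d * d * f) - v * f * X₀ * ⁅f, star v⁆ * (d * d) := by
    have hv' (z : E) : v * (star v * z) = z := by
      rw [← mul_assoc, Unitary.mul_star_self_of_mem hv, one_mul]
    simp only [Ring.lie_def, mul_assoc, mul_sub, sub_mul, hv', fX₀.left_comm, fX₁.eq, dX₁.left_comm,
      h.commute_mid_right.left_comm, h.commute_mid_right.eq]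
    abel
  have hd := h.norm_right_le
  have hv₁ := norm_le_one_of_mem_unitary hv
  rw [expand]
  refine (norm_sub_le_of_le
    (norm_mul_le_of_le (CStarRing.norm_mul_mem_unitary _ (Unitary.star_mem hv)).le hdf)
    (norm_mul_le_of_le (norm_mul_le_of_le (norm_mul_le_of_le (norm_mul_le_of_le hv₁ h.norm_mid_le)
      hX₀) (norm_lie_star_of_mem_unitary hv f).le) (norm_mul_le_of_le hd hd))).trans_eq ?_
  ring

theorem norm_offDiagonal_defect_le (h : IsPatchingTriple f a d) :
    ‖d * d * v * f * a‖ ≤ ‖⁅v, f⁆‖ + ‖⁅v, d * d * f⁆‖ := by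
  have expand : d * d * v * f * a = (d * d * ⁅v, f⁆ - ⁅v, d * d * f⁆) * a := by
    simp only [Ring.lie_def, mul_assoc, mul_sub, sub_mul, h.commute_mid_left.eq, h.right_mul_left,
      ← mul_assoc d a, zero_mul, mul_zero]
    abel
  have hd := h.norm_right_le
  rw [expand]
  refine (norm_mul_le_of_le (norm_sub_le_of_le
    (norm_mul_le_of_le (norm_mul_le_of_le hd hd) le_rfl) le_rfl) h.norm_left_le).trans_eq ?_
  ring

theorem cstarNorm_defect_le (h : IsPatchingTriple f a d) (hv : v ∈ unitary E)
    (hdf : ‖d * d * f‖ ≤ 1 / 2)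
    (hX₀ : X₀ ∈ Set.centralizer {f, a, d}) (hX₁ : X₁ ∈ Set.centralizer {f, a, d})
    (hY₀ : Y₀ ∈ Set.centralizer {f, a, d}) (hY₁ : Y₁ ∈ Set.centralizer {f, a, d})
    {r s : ℝ} (X₀r : ‖X₀‖ ≤ r) (X₁r : ‖X₁‖ ≤ r) (Y₀s : ‖Y₀‖ ≤ s) (Y₁s : ‖Y₁‖ ≤ s) :
    cstarNorm (patchMatrix v f a d * !![X₀, 0; 0, X₁] *
        (1 - star (patchMatrix v f a d) * patchMatrix v f a d) *
        !![Y₀, 0; 0, Y₁] * star (patchMatrix v f a d)) ≤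
      (4 * ‖⁅v, f⁆‖ + 2 * ‖⁅v, d * d * f⁆‖) * r * s + ‖f * X₁ * v - v * (f * X₀)‖ * s := by
  have fX₀ : Commute X₀ f := (hX₀ f (by simp)).symm
  have fX₁ : Commute X₁ f := (hX₁ f (by simp)).symm
  have dX₁ : Commute X₁ d := (hX₁ d (by simp)).symm
  have corner := norm_add_le_of_le
    (norm_mul_le_of_le (norm_mul_le_of_le (h.norm_left_defect_le (v := v) hdf fX₀ fX₁ X₀r X₁r) Y₀s)
      (norm_le_one_of_mem_unitary (Unitary.star_mem hv)))
    (norm_mul_le_of_le (h.norm_right_defect_le hv hdf fX₀ fX₁ dX₁ X₀r) Y₁s)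
  have upper := norm_mul_le_of_le
    (norm_mul_le_of_le X₁r (h.norm_offDiagonal_defect_le (v := v))) Y₀s
  have lower := norm_mul_le_of_le (norm_mul_le_of_le X₀r
    ((norm_star _).trans_le (h.norm_offDiagonal_defect_le (v := v)))) Y₁s
  rw [h.patchMatrix_defect_eq hv hX₀ hX₁ hY₀ hY₁]
  refine (cstarNorm_matrix_fin_two_le _ _ _ _).trans ?_
  rw [norm_zero, max_eq_left (norm_nonneg _), norm_neg, norm_neg]
  refine (add_le_add corner (max_le upper lower)).trans_eq ?_
  ring

theorem cstarNorm_lie_patchMatrix_mul_le (h : IsPatchingTriple f a d) (hv : v ∈ unitary E) {k : E}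
    (hk : k ∈ Set.centralizer {f, a, d}) :
    cstarNorm (⁅patchMatrix v f a d, Matrix.diagonal fun _ => k⁆ * !![X₀, 0; 0, X₁] *
        star (patchMatrix v f a d)) ≤
      (‖⁅f, v⁆‖ * ‖k‖ + ‖⁅k * f, v⁆‖) * ‖X₀‖ := by
  have fk : f * k = k * f := hk f (by simp)
  have ak : a * k = k * a := hk a (by simp)
  have dk : d * k = k * d := hk d (by simp)
  have factor : ⁅patchMatrix v f a d, Matrix.diagonal fun _ => k⁆ * !![X₀, 0; 0, X₁] *
      star (patchMatrix v f a d) =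
        !![(k * ⁅f, v⁆ - ⁅k * f, v⁆) * X₀, 0; 0, 0] * star !![v * f, 0; a, 0] := by
    rw [Ring.lie_def, patchMatrix, star_matrix_fin_two, star_matrix_fin_two,
      diagonal_const_fin_two]
    ext i j
    fin_cases i <;> fin_cases j <;> simp [Ring.lie_def, mul_assoc, mul_sub, fk, ak, dk]
  have column_le : cstarNorm !![v * f, 0; a, 0] ≤ 1 := by
    rw [← sq_le_one_iff₀ (cstarNorm_nonneg _), sq_cstarNorm_column, star_mul, mul_assoc,
      ← mul_assoc (star v), Unitary.star_mul_self_of_mem hv, one_mul]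
    exact norm_star_mul_self_add_le_one h.sum_star_mul_self
  rw [factor]
  refine (cstarNorm_mul_le _ _).trans ((mul_le_of_le_one_right (cstarNorm_nonneg _)
    ((cstarNorm_star _).trans_le column_le)).trans ?_)
  rw [cstarNorm_diagonal_fin_two, norm_zero, max_eq_left (norm_nonneg _), mul_comm ‖⁅f, v⁆‖]
  exact norm_mul_le_of_le (norm_sub_le_of_le (norm_mul_le _ _) le_rfl) le_rfl

theorem map_trace_patchMatrix_mul (h : IsPatchingTriple f a d) (hv : v ∈ unitary E)
    {τ : E →L[ℂ] ℂ} (hτ : IsTracialState τ) :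
    τ (patchMatrix v f a d * !![X₀, 0; 0, X₁] * star (patchMatrix v f a d)).trace =
      τ X₀ - τ (d * d * X₀) + τ (d * d * X₁) := by
  have star_mul_self : star (patchMatrix v f a d) * patchMatrix v f a d =
      1 - !![d * d, -(f * star v * d); -(d * v * f), f * f + a * a] := by
    rw [← h.one_sub_star_patchMatrix_mul_self hv, sub_sub_cancel]
  have hd : d * d = 1 - (f * f + a * a) := by rw [← h.sum_sq]; abel
  rw [hτ.map_trace_mul_comm, ← mul_assoc, star_mul_self, Matrix.one_fin_two, Matrix.trace_fin_two]
  simp [sub_mul, hd]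

end IsPatchingTriple

section Cutoffs

/-- The piecewise linear function on `[0,1]` equal to `0` left of `r` and to `1` right of `s`. -/
def ramp (r s : ℝ) : C(I, ℝ) where
  toFun t := max 0 (min 1 (((t : ℝ) - r) / (s - r)))
  continuous_toFun := by fun_prop

theorem ramp_mem_Icc (r s : ℝ) (t : I) : ramp r s t ∈ Set.Icc (0 : ℝ) 1 :=
  ⟨le_max_left _ _, max_le zero_le_one (min_le_left _ _)⟩

theorem ramp_eq_zero {r s : ℝ} (hrs : r < s) {t : I} (ht : (t : ℝ) ≤ r) : ramp r s t = 0 :=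
  max_eq_left <| (min_le_right _ _).trans <|
    div_nonpos_of_nonpos_of_nonneg (sub_nonpos.2 ht) (sub_nonneg.2 hrs.le)

theorem ramp_eq_one {r s : ℝ} (hrs : r < s) {t : I} (ht : s ≤ (t : ℝ)) : ramp r s t = 1 := by
  have one_le : 1 ≤ ((t : ℝ) - r) / (s - r) := by
    rw [one_le_div (sub_pos.2 hrs)]
    exact sub_le_sub_right ht r
  change max 0 (min 1 (((t : ℝ) - r) / (s - r))) = 1
  rw [min_eq_left one_le, max_eq_right zero_le_one]

/-- The function `f₀` of the partition of unity. -/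
def leftCutoff : C(I, ℝ) := 1 - ramp (1 / 3) (1 / 2)

/-- The function `f₁` of the partition of unity. -/
def rightCutoff : C(I, ℝ) := ramp (1 / 2) (2 / 3)

/-- The function `f_{1/2}` of the partition of unity. -/
def midCutoff : C(I, ℝ) := 1 - leftCutoff - rightCutoff

theorem leftCutoff_add_midCutoff_add_rightCutoff : leftCutoff + midCutoff + rightCutoff = 1 := by
  rw [midCutoff]
  ring

theorem leftCutoff_apply (t : I) : leftCutoff t = 1 - ramp (1 / 3) (1 / 2) t :=
  rfl

theorem midCutoff_apply (t : I) : midCutoff t = 1 - leftCutoff t - rightCutoff t :=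
  rfl

theorem leftCutoff_mem_Icc (t : I) : leftCutoff t ∈ Set.Icc (0 : ℝ) 1 :=
  Set.Icc.mem_iff_one_sub_mem.1 (ramp_mem_Icc _ _ t)

theorem rightCutoff_mem_Icc (t : I) : rightCutoff t ∈ Set.Icc (0 : ℝ) 1 :=
  ramp_mem_Icc _ _ t

theorem leftCutoff_eq_zero_or_rightCutoff_eq_zero (t : I) :
    leftCutoff t = 0 ∨ rightCutoff t = 0 := by
  rcases le_total (t : ℝ) (1 / 2) with ht | ht
  · exact .inr (ramp_eq_zero (by norm_num) ht)
  · exact .inl (by rw [leftCutoff_apply, ramp_eq_one (by norm_num) ht, sub_self])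

theorem midCutoff_mem_Icc (t : I) : midCutoff t ∈ Set.Icc (0 : ℝ) 1 := by
  have hl := leftCutoff_mem_Icc t
  have hr := rightCutoff_mem_Icc t
  rw [midCutoff_apply]
  rcases leftCutoff_eq_zero_or_rightCutoff_eq_zero t with h | h <;> rw [h] <;>
    constructor <;> linarith [hl.1, hl.2, hr.1, hr.2]

theorem leftCutoff_eq_one {t : I} (ht : (t : ℝ) ≤ 1 / 3) : leftCutoff t = 1 := by
  rw [leftCutoff_apply, ramp_eq_zero (by norm_num) ht, sub_zero]

theorem rightCutoff_eq_one {t : I} (ht : 2 / 3 ≤ (t : ℝ)) : rightCutoff t = 1 :=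
  ramp_eq_one (by norm_num) ht

theorem rightCutoff_eq_zero_of_leftCutoff_eq_one {t : I} (ht : leftCutoff t = 1) :
    rightCutoff t = 0 :=
  (leftCutoff_eq_zero_or_rightCutoff_eq_zero t).resolve_left (by simp [ht])

theorem leftCutoff_eq_zero_of_rightCutoff_eq_one {t : I} (ht : rightCutoff t = 1) :
    leftCutoff t = 0 :=
  (leftCutoff_eq_zero_or_rightCutoff_eq_zero t).resolve_right (by simp [ht])

theorem midCutoff_eq_zero {t : I} (ht : (t : ℝ) ∉ Set.Ioo (1 / 3 : ℝ) (2 / 3)) :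
    midCutoff t = 0 := by
  rw [Set.mem_Ioo, not_and_or, not_lt, not_lt] at ht
  rw [midCutoff_apply]
  rcases ht with ht | ht
  · have hl := leftCutoff_eq_one ht
    rw [hl, rightCutoff_eq_zero_of_leftCutoff_eq_one hl, sub_self, sub_zero]
  · have hr := rightCutoff_eq_one ht
    rw [hr, leftCutoff_eq_zero_of_rightCutoff_eq_one hr, sub_zero, sub_self]

/-- The function `√(g (1 + f_{1/2}))`. Since `f₀ + f₁ = 1 - f_{1/2}`, the factor `1 + f_{1/2}` makes
the squares of `f_{1/2}`, `amplitude f₀` and `amplitude f₁` add up to `1`. -/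
def amplitude (g : C(I, ℝ)) : C(I, ℝ) where
  toFun t := √(g t * (1 + midCutoff t))
  continuous_toFun := by fun_prop

theorem amplitude_apply (g : C(I, ℝ)) (t : I) : amplitude g t = √(g t * (1 + midCutoff t)) :=
  rfl

theorem amplitude_mul_self {g : C(I, ℝ)} (hg : ∀ t, 0 ≤ g t) :
    amplitude g * amplitude g = g * (1 + midCutoff) := by
  ext t
  exact Real.mul_self_sqrt (mul_nonneg (hg t) (by linarith [(midCutoff_mem_Icc t).1]))

theorem amplitude_leftCutoff_mul_amplitude_rightCutoff :
    amplitude leftCutoff * amplitude rightCutoff = 0 := by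
  ext t
  rcases leftCutoff_eq_zero_or_rightCutoff_eq_zero t with h | h <;> simp [amplitude_apply, h]

theorem midCutoff_sq_add_amplitude_sq :
    midCutoff * midCutoff + amplitude leftCutoff * amplitude leftCutoff +
      amplitude rightCutoff * amplitude rightCutoff = 1 := by
  rw [amplitude_mul_self fun t => (leftCutoff_mem_Icc t).1,
    amplitude_mul_self fun t => (rightCutoff_mem_Icc t).1, midCutoff]
  ring

theorem amplitude_rightCutoff_sq_mul_midCutoff :
    amplitude rightCutoff * amplitude rightCutoff * midCutoff =
      (1 + midCutoff) * (midCutoff * rightCutoff) := by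
  rw [amplitude_mul_self fun t => (rightCutoff_mem_Icc t).1]
  ring

theorem abs_amplitude_rightCutoff_sq_mul_midCutoff_le (t : I) :
    |(amplitude rightCutoff * amplitude rightCutoff * midCutoff) t| ≤ 1 / 2 := by
  have hm := midCutoff_mem_Icc t
  have hr := rightCutoff_mem_Icc t
  have right_le : rightCutoff t ≤ 1 - midCutoff t := by
    linarith [midCutoff_apply t, (leftCutoff_mem_Icc t).1]
  rw [amplitude_rightCutoff_sq_mul_midCutoff]
  change |(1 + midCutoff t) * (midCutoff t * rightCutoff t)| ≤ 1 / 2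
  have nonneg : 0 ≤ (1 + midCutoff t) * midCutoff t :=
    mul_nonneg (by linarith [hm.1]) hm.1
  rw [← mul_assoc, abs_of_nonneg (mul_nonneg nonneg hr.1)]
  refine (mul_le_mul_of_nonneg_left right_le nonneg).trans ?_
  nlinarith [mul_nonneg hm.1 (sq_nonneg (midCutoff t - 1 / 2))]

/-- An angle growing from `0` left of `1/3` to `π/2` right of `2/3`. -/
def rotationAngle : C(I, ℝ) := (Real.pi / 2) • ramp (1 / 3) (2 / 3)

/-- The sine of `rotationAngle`. -/
def rotationSin : C(I, ℝ) where
  toFun t := Real.sin (rotationAngle t)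
  continuous_toFun := by fun_prop

/-- The cosine of `rotationAngle`. -/
def rotationCos : C(I, ℝ) where
  toFun t := Real.cos (rotationAngle t)
  continuous_toFun := by fun_prop

theorem rotationSin_sq_add_rotationCos_sq :
    rotationSin * rotationSin + rotationCos * rotationCos = 1 := by
  ext t
  simpa [rotationSin, rotationCos, sq] using Real.sin_sq_add_cos_sq (rotationAngle t)

theorem rotationAngle_eq_zero {t : I} (ht : (t : ℝ) ≤ 1 / 3) : rotationAngle t = 0 := by
  rw [rotationAngle, ContinuousMap.smul_apply, ramp_eq_zero (by norm_num) ht, smul_zero]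

theorem rotationAngle_eq_pi_div_two {t : I} (ht : 2 / 3 ≤ (t : ℝ)) :
    rotationAngle t = Real.pi / 2 := by
  rw [rotationAngle, ContinuousMap.smul_apply, ramp_eq_one (by norm_num) ht, smul_eq_mul, mul_one]

end Cutoffs

section Compatible

variable {A E : Type} [CStarAlgebra A] [CStarAlgebra E]

theorem isClosed_susp : IsClosed (susp A : Set C(I, A)) :=
  (isClosed_eq (continuous_eval_const 0) continuous_const).inter
    (isClosed_eq (continuous_eval_const 1) continuous_const)

theorem norm_map_susp_le (ν : susp A →⋆ₙₐ[ℂ] E) (x : susp A) : ‖ν x‖ ≤ ‖(x : C(I, A))‖ := by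
  let _ : NonUnitalCStarAlgebra (susp A) :=
    NonUnitalStarSubalgebra.nonUnitalCStarAlgebra (susp A) (h_closed := isClosed_susp)
  exact NonUnitalStarAlgHom.norm_apply_le ν x

/-- The restriction `k ↦ θ(k)` of `θ` to real-valued functions, as a ring homomorphism. -/
def realHom (θ : C(I, ℂ) →⋆ₐ[ℂ] E) : C(I, ℝ) →+* E :=
  (θ : C(I, ℂ) →+* E).comp (Complex.ofRealHom.compLeftContinuous I Complex.continuous_ofReal)

variable {θ : C(I, ℂ) →⋆ₐ[ℂ] E}

theorem realHom_apply (k : C(I, ℝ)) : realHom θ k = θ (ofRealCM k) :=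
  rfl

theorem isSelfAdjoint_realHom (k : C(I, ℝ)) : IsSelfAdjoint (realHom θ k) := by
  have star_ofRealCM : star (ofRealCM k) = ofRealCM k := by
    ext t
    exact Complex.conj_ofReal (k t)
  rw [IsSelfAdjoint, realHom_apply, ← map_star, star_ofRealCM]

theorem commute_realHom (h : C(I, ℂ)) (k : C(I, ℝ)) : Commute (θ h) (realHom θ k) :=
  (Commute.all h (ofRealCM k)).map θ

theorem norm_realHom_le {k : C(I, ℝ)} {c : ℝ} (hc : 0 ≤ c) (hk : ∀ t, |k t| ≤ c) :
    ‖realHom θ k‖ ≤ c :=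
  (NonUnitalStarAlgHom.norm_apply_le θ (ofRealCM k)).trans <|
    (ContinuousMap.norm_le _ hc).2 fun t => (Complex.norm_real (k t)).trans_le (hk t)

theorem isPatchingTriple_realHom {f a d : C(I, ℝ)} (had : a * d = 0)
    (hsum : f * f + a * a + d * d = 1) :
    IsPatchingTriple (realHom θ f) (realHom θ a) (realHom θ d) where
  isSelfAdjoint_mid := isSelfAdjoint_realHom f
  isSelfAdjoint_left := isSelfAdjoint_realHom a
  isSelfAdjoint_right := isSelfAdjoint_realHom d
  commute_mid_left := commute_realHom _ a
  commute_mid_right := commute_realHom _ d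
  left_mul_right := by rw [← map_mul, had, map_zero]
  sum_sq := by simp only [← map_mul, ← map_add, hsum, map_one]

namespace Compatible

variable {ν : susp A →⋆ₙₐ[ℂ] E}

theorem realHom_mul (hν : Compatible θ ν) (k : C(I, ℝ)) (x : susp A) :
    realHom θ k * ν x = ν (hsmul (ofRealCM k) x) :=
  (hν _ x).1.symm

theorem mul_realHom (hν : Compatible θ ν) (k : C(I, ℝ)) (x : susp A) :
    ν x * realHom θ k = ν (hsmul (ofRealCM k) x) :=
  (hν _ x).2.symm

theorem mul_realHom_mul (hν : Compatible θ ν) (k : C(I, ℝ)) (x : susp A) (z : E) :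
    ν x * (realHom θ k * z) = ν (hsmul (ofRealCM k) x) * z := by
  rw [← mul_assoc, hν.mul_realHom]

theorem mem_centralizer (hν : Compatible θ ν) (f a d : C(I, ℝ)) (x : susp A) :
    ν x ∈ Set.centralizer {realHom θ f, realHom θ a, realHom θ d} := by
  have commute (k : C(I, ℝ)) : realHom θ k * ν x = ν x * realHom θ k := by
    rw [hν.realHom_mul, hν.mul_realHom]
  simp [Set.mem_centralizer_iff, commute]

end Compatible

variable {k : C(I, ℝ)} {x : susp A}

theorem hsmul_ofRealCM_eq_zero (h : ∀ t, (x : C(I, A)) t ≠ 0 → k t = 0) :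
    hsmul (ofRealCM k) x = 0 := by
  ext t
  by_cases hx : (x : C(I, A)) t = 0
  · simp [hsmul, hx]
  · simp [hsmul, ofRealCM, h t hx]

theorem hsmul_ofRealCM_eq_self (h : ∀ t, (x : C(I, A)) t ≠ 0 → k t = 1) :
    hsmul (ofRealCM k) x = x := by
  ext t
  by_cases hx : (x : C(I, A)) t = 0
  · simp [hsmul, hx]
  · simp [hsmul, ofRealCM, h t hx]

end Compatible

section PatchingMap

variable {A E : Type} [CStarAlgebra A] [CStarAlgebra E]

/-- The matrix `S` of the patching map, with its entries taken from the cutoff functions. -/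
def cutoffMatrix (θ : C(I, ℂ) →⋆ₐ[ℂ] E) (v : E) : Matrix (Fin 2) (Fin 2) E :=
  patchMatrix v (realHom θ midCutoff) (realHom θ (amplitude leftCutoff))
    (realHom θ (amplitude rightCutoff))

/-- The unitary `U` rotating the lower right corner, which carries `ν₀` near `0`, into the upper
left one. -/
def cutoffRotation (θ : C(I, ℂ) →⋆ₐ[ℂ] E) : Matrix (Fin 2) (Fin 2) E :=
  rotationMatrix (realHom θ rotationSin) (realHom θ rotationCos)

/-- The patching map `ρ(x) = U S (ν₀(x) ⊕ ν₁(x)) S* U*`. -/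
def patchingMap (θ : C(I, ℂ) →⋆ₐ[ℂ] E) (v : E) (ν₀ ν₁ : susp A →⋆ₙₐ[ℂ] E) :
    susp A →ₗ[ℂ] Matrix (Fin 2) (Fin 2) E :=
  stinespringMap (B := susp A) (cutoffRotation θ * cutoffMatrix θ v) (diagonalHom ![ν₀, ν₁])

variable {θ : C(I, ℂ) →⋆ₐ[ℂ] E} {ν₀ ν₁ : susp A →⋆ₙₐ[ℂ] E} {v : E}

theorem isPatchingTriple_cutoffs :
    IsPatchingTriple (realHom θ midCutoff) (realHom θ (amplitude leftCutoff))
      (realHom θ (amplitude rightCutoff)) :=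
  isPatchingTriple_realHom amplitude_leftCutoff_mul_amplitude_rightCutoff
    midCutoff_sq_add_amplitude_sq

theorem cutoffRotation_mem_unitary : cutoffRotation θ ∈ unitary (Matrix (Fin 2) (Fin 2) E) :=
  rotationMatrix_mem_unitary (isSelfAdjoint_realHom _) (isSelfAdjoint_realHom _)
    (commute_realHom _ _) (by rw [← map_mul, ← map_mul, ← map_add,
      rotationSin_sq_add_rotationCos_sq, map_one])

theorem patchingMap_apply (x : susp A) :
    patchingMap θ v ν₀ ν₁ x = cutoffRotation θ *
      (cutoffMatrix θ v * !![ν₀ x, 0; 0, ν₁ x] * star (cutoffMatrix θ v)) *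
        star (cutoffRotation θ) := by
  rw [patchingMap, stinespringMap_apply, diagonalHom_apply_fin_two, star_mul]
  simp only [mul_assoc]

theorem isCompletelyPositive_patchingMap :
    IsCompletelyPositive (B := susp A) (C := Matrix (Fin 2) (Fin 2) E) (patchingMap θ v ν₀ ν₁) :=
  isCompletelyPositive_stinespringMap _ _

theorem patchingMap_of_left (h₀ : Compatible θ ν₀) (h₁ : Compatible θ ν₁) {x : susp A}
    (hx : ∀ t : I, (t : ℝ) ∉ Set.Ioo (0 : ℝ) (1 / 3) → (x : C(I, A)) t = 0) :
    patchingMap θ v ν₀ ν₁ x = !![ν₀ x, 0; 0, 0] := by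
  have le_of_ne (t : I) (ht : (x : C(I, A)) t ≠ 0) : (t : ℝ) ≤ 1 / 3 :=
    (not_imp_comm.1 (hx t) ht).2.le
  have mid : hsmul (ofRealCM midCutoff) x = 0 := hsmul_ofRealCM_eq_zero fun t ht =>
    midCutoff_eq_zero fun h => (le_of_ne t ht).not_gt h.1
  have left : hsmul (ofRealCM (amplitude leftCutoff)) x = x := hsmul_ofRealCM_eq_self fun t ht => by
    simp [amplitude_apply, leftCutoff_eq_one (le_of_ne t ht),
      midCutoff_eq_zero fun h => (le_of_ne t ht).not_gt h.1]
  have right : hsmul (ofRealCM (amplitude rightCutoff)) x = 0 :=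
    hsmul_ofRealCM_eq_zero fun t ht => by
      simp [amplitude_apply,
        rightCutoff_eq_zero_of_leftCutoff_eq_one (leftCutoff_eq_one (le_of_ne t ht))]
  have sin : hsmul (ofRealCM rotationSin) x = 0 := hsmul_ofRealCM_eq_zero fun t ht => by
    simp [rotationSin, rotationAngle_eq_zero (le_of_ne t ht)]
  have cos : hsmul (ofRealCM rotationCos) x = x := hsmul_ofRealCM_eq_self fun t ht => by
    simp [rotationCos, rotationAngle_eq_zero (le_of_ne t ht)]
  rw [patchingMap_apply, cutoffMatrix, patchMatrix, cutoffRotation, rotationMatrix,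
    star_matrix_fin_two, star_matrix_fin_two]
  simp only [Matrix.mul_fin_two]
  simp [(isSelfAdjoint_realHom _).star_eq, mul_assoc, h₀.realHom_mul, h₀.mul_realHom,
    h₀.mul_realHom_mul, h₁.realHom_mul, mid, left, right, sin, cos]

theorem patchingMap_of_right (h₀ : Compatible θ ν₀) (h₁ : Compatible θ ν₁) {x : susp A}
    (hx : ∀ t : I, (t : ℝ) ∉ Set.Ioo (2 / 3 : ℝ) 1 → (x : C(I, A)) t = 0) :
    patchingMap θ v ν₀ ν₁ x = !![ν₁ x, 0; 0, 0] := by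
  have ge_of_ne (t : I) (ht : (x : C(I, A)) t ≠ 0) : 2 / 3 ≤ (t : ℝ) :=
    (not_imp_comm.1 (hx t) ht).1.le
  have mid : hsmul (ofRealCM midCutoff) x = 0 := hsmul_ofRealCM_eq_zero fun t ht =>
    midCutoff_eq_zero fun h => (ge_of_ne t ht).not_gt h.2
  have left : hsmul (ofRealCM (amplitude leftCutoff)) x = 0 :=
    hsmul_ofRealCM_eq_zero fun t ht => by
      simp [amplitude_apply,
        leftCutoff_eq_zero_of_rightCutoff_eq_one (rightCutoff_eq_one (ge_of_ne t ht))]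
  have right : hsmul (ofRealCM (amplitude rightCutoff)) x = x :=
    hsmul_ofRealCM_eq_self fun t ht => by
      simp [amplitude_apply, rightCutoff_eq_one (ge_of_ne t ht),
        midCutoff_eq_zero fun h => (ge_of_ne t ht).not_gt h.2]
  have sin : hsmul (ofRealCM rotationSin) x = x := hsmul_ofRealCM_eq_self fun t ht => by
    simp [rotationSin, rotationAngle_eq_pi_div_two (ge_of_ne t ht)]
  have cos : hsmul (ofRealCM rotationCos) x = 0 := hsmul_ofRealCM_eq_zero fun t ht => by
    simp [rotationCos, rotationAngle_eq_pi_div_two (ge_of_ne t ht)]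
  rw [patchingMap_apply, cutoffMatrix, patchMatrix, cutoffRotation, rotationMatrix,
    star_matrix_fin_two, star_matrix_fin_two]
  simp only [Matrix.mul_fin_two]
  simp [(isSelfAdjoint_realHom _).star_eq, mul_assoc, h₀.realHom_mul, h₁.realHom_mul,
    h₁.mul_realHom, mid, left, right, sin, cos]

theorem map_trace_patchingMap (h₀ : Compatible θ ν₀) (h₁ : Compatible θ ν₁) (hv : v ∈ unitary E)
    {τ : E →L[ℂ] ℂ} (hτ : IsTracialState τ) (hτν : ∀ x, τ (ν₀ x) = τ (ν₁ x)) (x : susp A) :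
    τ (patchingMap θ v ν₀ ν₁ x 0 0) + τ (patchingMap θ v ν₀ ν₁ x 1 1) = τ (ν₀ x) := by
  rw [← map_add, ← Matrix.trace_fin_two, patchingMap_apply, hτ.map_trace_mul_comm, ← mul_assoc,
    Unitary.star_mul_self_of_mem cutoffRotation_mem_unitary, one_mul, cutoffMatrix,
    isPatchingTriple_cutoffs.map_trace_patchMatrix_mul hv hτ, ← map_mul, h₀.realHom_mul,
    h₁.realHom_mul, hτν (hsmul _ x), sub_add_cancel]

theorem cstarNorm_patchingMap_hsmul_sub_le (h₀ : Compatible θ ν₀) (h₁ : Compatible θ ν₁)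
    (hv : v ∈ unitary E) (h : C(I, ℂ)) (x : susp A) :
    cstarNorm (patchingMap θ v ν₀ ν₁ (hsmul h x) -
        Matrix.diagonal (fun _ => θ h) * patchingMap θ v ν₀ ν₁ x) ≤
      (‖⁅realHom θ midCutoff, v⁆‖ * ‖h‖ + ‖⁅θ (h * ofRealCM midCutoff), v⁆‖) *
        ‖(x : C(I, A))‖ := by
  have rotation_comm : Matrix.diagonal (fun _ => θ h) * cutoffRotation θ =
      cutoffRotation θ * Matrix.diagonal (fun _ => θ h) :=
    commute_diagonal_rotationMatrix (commute_realHom h _) (commute_realHom h _)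
  have map_hsmul : !![ν₀ (hsmul h x), 0; 0, ν₁ (hsmul h x)] =
      Matrix.diagonal (fun _ => θ h) * !![ν₀ x, 0; 0, ν₁ x] := by
    simp [diagonal_const_fin_two, (h₀ h x).1, (h₁ h x).1]
  have conj : patchingMap θ v ν₀ ν₁ (hsmul h x) -
      Matrix.diagonal (fun _ => θ h) * patchingMap θ v ν₀ ν₁ x =
        cutoffRotation θ * (⁅cutoffMatrix θ v, Matrix.diagonal fun _ => θ h⁆ *
          !![ν₀ x, 0; 0, ν₁ x] * star (cutoffMatrix θ v)) * star (cutoffRotation θ) := by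
    rw [patchingMap_apply, patchingMap_apply, map_hsmul, Ring.lie_def]
    simp only [← mul_assoc, rotation_comm, mul_sub, sub_mul]
  rw [conj, cstarNorm_conj_of_mem_unitary _ cutoffRotation_mem_unitary]
  refine (isPatchingTriple_cutoffs.cstarNorm_lie_patchMatrix_mul_le hv ?_).trans ?_
  · simp [Set.mem_centralizer_iff, (commute_realHom h _).eq]
  · rw [map_mul, realHom_apply]
    gcongr
    · exact NonUnitalStarAlgHom.norm_apply_le θ h
    · exact norm_map_susp_le ν₀ x

theorem norm_lie_amplitude_sq_mul_midCutoff_le (v : E) :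
    ‖⁅v, realHom θ (amplitude rightCutoff) * realHom θ (amplitude rightCutoff) *
        realHom θ midCutoff⁆‖ ≤
      ‖⁅v, realHom θ midCutoff⁆‖ + 2 * ‖⁅v, realHom θ (midCutoff * rightCutoff)⁆‖ := by
  have leibniz : ⁅v, (1 + realHom θ midCutoff) * realHom θ (midCutoff * rightCutoff)⁆ =
      ⁅v, realHom θ midCutoff⁆ * realHom θ (midCutoff * rightCutoff) +
        (1 + realHom θ midCutoff) * ⁅v, realHom θ (midCutoff * rightCutoff)⁆ := by
    simp only [Ring.lie_def]
    noncomm_ring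
  have norm_prod_le : ‖realHom θ (midCutoff * rightCutoff)‖ ≤ 1 :=
    norm_realHom_le zero_le_one fun t => by
      have hm := midCutoff_mem_Icc t
      have hr := rightCutoff_mem_Icc t
      rw [ContinuousMap.mul_apply, abs_of_nonneg (mul_nonneg hm.1 hr.1)]
      exact mul_le_one₀ hm.2 hr.1 hr.2
  have norm_one_add_le : ‖1 + realHom θ midCutoff‖ ≤ 2 := by
    rw [← map_one (realHom θ), ← map_add]
    refine norm_realHom_le zero_le_two fun t => ?_
    have hm := midCutoff_mem_Icc t
    rw [ContinuousMap.add_apply, ContinuousMap.one_apply, abs_le]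
    constructor <;> linarith [hm.1, hm.2]
  rw [← map_mul, ← map_mul, amplitude_rightCutoff_sq_mul_midCutoff, map_mul, map_add, map_one,
    leibniz]
  refine (norm_add_le_of_le (norm_mul_le_of_le le_rfl norm_prod_le)
    (norm_mul_le_of_le norm_one_add_le le_rfl)).trans_eq ?_
  rw [mul_one]

theorem cstarNorm_patchingMap_mul_sub_le (h₀ : Compatible θ ν₀) (h₁ : Compatible θ ν₁)
    (hv : v ∈ unitary E) (x y : susp A) :
    cstarNorm (patchingMap θ v ν₀ ν₁ (x * y) -
        patchingMap θ v ν₀ ν₁ x * patchingMap θ v ν₀ ν₁ y) ≤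
      (6 * ‖⁅v, realHom θ midCutoff⁆‖ + 4 * ‖⁅v, realHom θ (midCutoff * rightCutoff)⁆‖) *
          ‖(x : C(I, A))‖ * ‖(y : C(I, A))‖ +
        ‖ν₁ (hsmul (ofRealCM midCutoff) x) * v - v * ν₀ (hsmul (ofRealCM midCutoff) x)‖ *
          ‖(y : C(I, A))‖ := by
  have conj : patchingMap θ v ν₀ ν₁ (x * y) -
      patchingMap θ v ν₀ ν₁ x * patchingMap θ v ν₀ ν₁ y =
        cutoffRotation θ * (cutoffMatrix θ v * !![ν₀ x, 0; 0, ν₁ x] *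
          (1 - star (cutoffMatrix θ v) * cutoffMatrix θ v) * !![ν₀ y, 0; 0, ν₁ y] *
            star (cutoffMatrix θ v)) * star (cutoffRotation θ) := by
    rw [patchingMap, stinespringMap_mul_sub, diagonalHom_apply_fin_two, diagonalHom_apply_fin_two,
      star_mul_self_of_mem_unitary_mul cutoffRotation_mem_unitary, star_mul]
    simp only [mul_assoc]
  have norm_le_half : ‖realHom θ (amplitude rightCutoff) * realHom θ (amplitude rightCutoff) *
      realHom θ midCutoff‖ ≤ 1 / 2 := by
    rw [← map_mul, ← map_mul]
    exact norm_realHom_le (by norm_num) abs_amplitude_rightCutoff_sq_mul_midCutoff_le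
  have defect_le := isPatchingTriple_cutoffs.cstarNorm_defect_le hv norm_le_half
    (h₀.mem_centralizer _ _ _ x) (h₁.mem_centralizer _ _ _ x)
    (h₀.mem_centralizer _ _ _ y) (h₁.mem_centralizer _ _ _ y)
    (norm_map_susp_le ν₀ x) (norm_map_susp_le ν₁ x) (norm_map_susp_le ν₀ y) (norm_map_susp_le ν₁ y)
  rw [conj, cstarNorm_conj_of_mem_unitary _ cutoffRotation_mem_unitary]
  rw [h₁.realHom_mul, h₀.realHom_mul] at defect_le
  refine defect_le.trans ?_
  gcongr ?_ * _ * _ + _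
  linarith [norm_lie_amplitude_sq_mul_midCutoff_le (θ := θ) v]

end PatchingMap

/-- **The patching lemma** (Lemma 4.1 of Tikuisis–White–Winter, "Quasidiagonality of nuclear
C*-algebras"). There is a partition of unity `f₀, f_{1/2}, f₁` of `C([0,1])` with `f_{1/2}`
supported in `(1/3,2/3)` such that: for all unital C*-algebras `A`, `E`, every unital
*-homomorphism `θ : C([0,1]) → E`, all `θ`-compatible *-homomorphisms
`ν₀, ν₁ : C₀((0,1),A) → E` and every unitary `v ∈ E`, there is a completely positive map
`ρ : C₀((0,1),A) → M₂(E)` restricting to `ν₀ ⊕ 0` on `(0,1/3)` and `ν₁ ⊕ 0` on `(2/3,1)`,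
matching traces, and satisfying the approximate compatibility and approximate multiplicativity
estimates (iv) and (v). -/
theorem patching_lemma :
    ∃ f0 fh f1 : C(I, ℝ),
      (∀ t, f0 t ∈ Set.Icc (0 : ℝ) 1) ∧ (∀ t, fh t ∈ Set.Icc (0 : ℝ) 1) ∧
      (∀ t, f1 t ∈ Set.Icc (0 : ℝ) 1) ∧
      (∀ t, f0 t + fh t + f1 t = 1) ∧
      (∀ t : I, (t : ℝ) ∉ Set.Ioo (1/3 : ℝ) (2/3) → fh t = 0) ∧
      ∀ (A : Type) [CStarAlgebra A], ∀ (E : Type) [CStarAlgebra E],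
        ∀ (θ : C(I, ℂ) →⋆ₐ[ℂ] E) (ν₀ ν₁ : susp A →⋆ₙₐ[ℂ] E) (v : E),
          Compatible θ ν₀ → Compatible θ ν₁ → v ∈ unitary E →
          ∃ ρ : susp A →ₗ[ℂ] Matrix (Fin 2) (Fin 2) E,
            IsCompletelyPositive (B := susp A) (C := Matrix (Fin 2) (Fin 2) E) ρ ∧
            -- (i) : ρ recovers ν₀ ⊕ 0 on (0, 1/3)
            (∀ x : susp A,
              (∀ t : I, (t : ℝ) ∉ Set.Ioo (0 : ℝ) (1/3) → (x : C(I, A)) t = 0) →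
              ρ x = !![ν₀ x, 0; 0, 0]) ∧
            -- (ii) : ρ recovers ν₁ ⊕ 0 on (2/3, 1)
            (∀ x : susp A,
              (∀ t : I, (t : ℝ) ∉ Set.Ioo (2/3 : ℝ) 1 → (x : C(I, A)) t = 0) →
              ρ x = !![ν₁ x, 0; 0, 0]) ∧
            -- (iii) : traces
            (∀ τ : E →L[ℂ] ℂ, IsTracialState τ → (∀ x : susp A, τ (ν₀ x) = τ (ν₁ x)) →
              ∀ x : susp A, τ (ρ x 0 0) + τ (ρ x 1 1) = τ (ν₀ x)) ∧
            -- (iv) : approximate compatibility with θ^{⊕2}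
            (∀ (h : C(I, ℂ)) (x : susp A),
              cstarNorm (ρ (hsmul h x) - Matrix.diagonal (fun _ => θ h) * ρ x) ≤
                (‖θ (ofRealCM fh) * v - v * θ (ofRealCM fh)‖ * ‖h‖ +
                  ‖θ (h * ofRealCM fh) * v - v * θ (h * ofRealCM fh)‖) *
                  ‖(x : C(I, A))‖) ∧
            -- (v) : approximate multiplicativity
            (∀ x y : susp A,
              cstarNorm (ρ (x * y) - ρ x * ρ y) ≤
                (7 * ‖v * θ (ofRealCM fh) - θ (ofRealCM fh) * v‖ +
                  2 * ‖v * θ (ofRealCM f0 * ofRealCM fh) - θ (ofRealCM f0 * ofRealCM fh) * v‖ +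
                  5 * ‖v * θ (ofRealCM fh * ofRealCM f1) - θ (ofRealCM fh * ofRealCM f1) * v‖) *
                  ‖(x : C(I, A))‖ * ‖(y : C(I, A))‖ +
                (‖ν₁ (hsmul (ofRealCM fh * ofRealCM f1) x) * v -
                    v * ν₀ (hsmul (ofRealCM fh * ofRealCM f1) x)‖ +
                  ‖ν₁ (hsmul (ofRealCM fh) x) * v - v * ν₀ (hsmul (ofRealCM fh) x)‖) *
                  ‖(y : C(I, A))‖) := by
  refine ⟨leftCutoff, midCutoff, rightCutoff, leftCutoff_mem_Icc, midCutoff_mem_Icc,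
    rightCutoff_mem_Icc, DFunLike.congr_fun leftCutoff_add_midCutoff_add_rightCutoff,
    fun _ => midCutoff_eq_zero, fun A _ E _ θ ν₀ ν₁ v h₀ h₁ hv =>
      ⟨patchingMap θ v ν₀ ν₁, isCompletelyPositive_patchingMap, fun _ => patchingMap_of_left h₀ h₁,
        fun _ => patchingMap_of_right h₀ h₁, fun _ => map_trace_patchingMap h₀ h₁ hv,
        cstarNorm_patchingMap_hsmul_sub_le h₀ h₁ hv, fun x y => ?_⟩⟩
  refine (cstarNorm_patchingMap_mul_sub_le h₀ h₁ hv x y).trans (add_le_add ?_ ?_)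
  · gcongr ?_ * _ * _
    have norm_lie_mid := norm_nonneg ⁅v, realHom θ midCutoff⁆
    have norm_lie_left_mid := norm_nonneg ⁅v, realHom θ (leftCutoff * midCutoff)⁆
    have norm_lie_mid_right := norm_nonneg ⁅v, realHom θ (midCutoff * rightCutoff)⁆
    simp only [Ring.lie_def, map_mul, realHom_apply] at *
    linarith
  · gcongr
    exact le_add_of_nonneg_left (norm_nonneg _)
end
end

section
/- Let A and E be unital C*-algebras, θ : C([0,1],ℂ) → E a unital *-homomorphism, ν₀, ν₁ : C₀((0,1),A) → E *-homomorphisms compatible with θ, and v ∈ E a unitary such that v ν₀(x) v* = ν₁(x) for every x ∈ C₀((0,1),A) with x(t) = 0 for all t ∉ (1/3, 2/3). Then there exists a *-homomorphism ρ : C₀((0,1),A) → M₂(E) such that: (i) for every x with x(t) = 0 for all t ∉ (0, 1/3), ρ(x) is the matrix with ν₀(x) in the (1,1) entry and 0 elsewhere; (ii) for every x with x(t) = 0 for all t ∉ (2/3, 1), ρ(x) is the matrix with ν₁(x) in the (1,1) entry and 0 elsewhere; (iii) for every tracial state τ on E with τ∘ν₀ = τ∘ν₁, one has (τ ⊗ Tr₂)(ρ(x))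 = τ(ν₀(x)) for all x; and (iv) ρ(h·x) = θ^{⊕2}(h)ρ(x) = ρ(x)θ^{⊕2}(h) for all h ∈ C([0,1],ℂ) and x ∈ C₀((0,1),A). -/
open scoped ComplexOrder unitInterval ENNReal

set_option synthInstance.maxHeartbeats 1000000
set_option maxHeartbeats 1000000

noncomputable section

/-!
Let `c, d, s` be real cutoffs on `[0,1]` with `c² + d² + s² = 1`, where `c` lives on the left,
`d` in the middle third, `s` on the right, and `d = 1` near `1/2`. The column
`p₀ = (θ(c), θ(d))` is isometric over the left half, where it transports `ν₀` to
`x ↦ p₀ ν₀(x) p₀*`; the column `p₁ = (θ(s), v*θ(d))` is isometric over the right half, where it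
transports `ν₁` to `x ↦ p₁ ν₁(x) p₁*`. Near `1/2` only the entry `(2,2)` survives, and there the
two maps agree because `v` conjugates `ν₀` to `ν₁`. The second coordinate is what makes room for
`v`, which need not commute with the range of `θ`. A partition of unity glues the two maps.
-/

section BimoduleMap

variable {𝕜 K S B : Type*}

/-- A map `φ : S → B` is a bimodule map along `θ : K → B` if it turns the scalars `h : K` into left
and right multiplication by `θ h`. With `K = C([0,1],ℂ)` and `S = C₀((0,1),A)` this is
compatibility with `θ`; here `θ` is a bare function so that `θ^{⊕2}` needs no bundling. -/
def IsBimoduleMap [SMul K S] [Mul B] (θ : K → B) (φ : S → B) : Prop :=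
  ∀ (h : K) (x : S), φ (h • x) = θ h * φ x ∧ φ (h • x) = φ x * θ h

theorem IsBimoduleMap.of_left [Star K] [InvolutiveStar S] [SMul K S] [StarModule K S]
    [Mul B] [StarMul B] {θ : K → B} {φ : S → B} (hθ : ∀ h, θ (star h) = star (θ h))
    (hφ : ∀ x, φ (star x) = star (φ x)) (hleft : ∀ (h : K) (x : S), φ (h • x) = θ h * φ x) :
    IsBimoduleMap θ φ := by
  refine fun h x => ⟨hleft h x, star_injective ?_⟩
  rw [star_mul, ← hφ, ← hφ, ← hθ, star_smul, hleft]

theorem IsBimoduleMap.mul_mul_map [CommMonoid K] [MulAction K S] [Mul B] {θ : K → B} {φ : S → B}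
    (hφ : IsBimoduleMap θ φ) (h k : K) (x : S) : θ h * (θ k * φ x) = θ k * φ (h • x) := by
  rw [← (hφ k x).1, ← (hφ h _).1, smul_comm, (hφ k _).1]

theorem IsBimoduleMap.mul_map_mul [CommMonoid K] [MulAction K S] [Mul B] {θ : K → B} {φ : S → B}
    (hφ : IsBimoduleMap θ φ) (h k : K) (x : S) : θ h * φ x * θ k = φ ((h * k) • x) := by
  rw [← (hφ h x).1, ← (hφ k _).2, smul_smul, mul_comm]

variable [CommSemiring 𝕜] [CommRing K] [NonUnitalNonAssocSemiring S] [Module 𝕜 S] [Module K S]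
  [Ring B] [Module 𝕜 B] {φ₀ φ₁ : S →ₗ[𝕜] B} {θ : K → B} {e₀ e₁ f : K}

/-- The map `x ↦ φ₀ (f x) + φ₁ ((1 - f) x)` that uses `φ₀` where `f = 1` and `φ₁` where `f = 0`. -/
def glue [SMulCommClass K 𝕜 S] (φ₀ φ₁ : S →ₗ[𝕜] B) (f : K) : S →ₗ[𝕜] B where
  toFun x := φ₀ (f • x) + φ₁ ((1 - f) • x)
  map_add' x y := by simp only [smul_add, map_add]; abel
  map_smul' z x := by simp only [smul_comm _ z, map_smul, smul_add, RingHom.id_apply]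

variable [SMulCommClass K 𝕜 S]

theorem glue_apply (φ₀ φ₁ : S →ₗ[𝕜] B) (f : K) (x : S) :
    glue φ₀ φ₁ f x = φ₀ (f • x) + φ₁ ((1 - f) • x) := rfl

theorem isBimoduleMap_glue (h₀ : IsBimoduleMap θ φ₀) (h₁ : IsBimoduleMap θ φ₁) (f : K) :
    IsBimoduleMap θ (glue φ₀ φ₁ f) := by
  intro h x
  simp only [glue_apply, smul_comm _ h x, (h₀ h _).1, (h₁ h _).1, mul_add, true_and]
  rw [← (h₀ h _).1, ← (h₁ h _).1, (h₀ h _).2, (h₁ h _).2, add_mul]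

theorem glue_star [StarRing K] [StarRing S] [StarModule K S] [StarRing B]
    (h₀ : ∀ x, φ₀ (star x) = star (φ₀ x)) (h₁ : ∀ x, φ₁ (star x) = star (φ₁ x))
    (hf : IsSelfAdjoint f) (x : S) :
    glue φ₀ φ₁ f (star x) = star (glue φ₀ φ₁ f x) := by
  have hf' : IsSelfAdjoint (1 - f) := .sub (.one K) hf
  simp only [glue_apply, star_add, ← h₀, ← h₁, star_smul, hf.star_eq, hf'.star_eq]

variable [SMulCommClass K S S]

theorem IsBimoduleMap.mul_eq_of_overlap {φ ψ : S → B} (hφ : IsBimoduleMap θ φ)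
    (hψ : IsBimoduleMap θ ψ) {e h k : K} (hmul : ∀ x y, φ x * φ y = φ (e • (x * y)))
    (he : e * (h * k) = h * k) (hover : ∀ x, φ ((h * k) • x) = ψ ((h * k) • x)) (x y : S) :
    φ (h • x) * ψ (k • y) = φ ((h * k) • (x * y)) :=
  calc φ (h • x) * ψ (k • y)
      = φ x * ψ ((h * k) • y) := by rw [(hφ h x).2, mul_assoc, ← (hψ h _).1, smul_smul]
    _ = φ x * φ ((h * k) • y) := by rw [hover]
    _ = φ ((h * k) • (x * y)) := by rw [hmul, mul_smul_comm, smul_smul, he]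

theorem glue_mul (h₀ : IsBimoduleMap θ φ₀) (h₁ : IsBimoduleMap θ φ₁)
    (hmul₀ : ∀ x y, φ₀ x * φ₀ y = φ₀ (e₀ • (x * y)))
    (hmul₁ : ∀ x y, φ₁ x * φ₁ y = φ₁ (e₁ • (x * y)))
    (he₀ : e₀ * f = f) (he₁ : e₁ * (1 - f) = 1 - f)
    (hover : ∀ x, φ₀ ((f * (1 - f)) • x) = φ₁ ((f * (1 - f)) • x)) (x y : S) :
    glue φ₀ φ₁ f (x * y) = glue φ₀ φ₁ f x * glue φ₀ φ₁ f y := by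
  have h00 := h₀.mul_eq_of_overlap h₀ (h := f) (k := f) hmul₀
    (by linear_combination f * he₀) (fun _ => rfl) x y
  have h01 := h₀.mul_eq_of_overlap h₁ (h := f) (k := 1 - f) hmul₀
    (by linear_combination (1 - f) * he₀) hover x y
  have h10 := h₁.mul_eq_of_overlap h₀ (h := 1 - f) (k := f) hmul₁
    (by linear_combination f * he₁) (fun z => by rw [mul_comm, hover]) x y
  have h11 := h₁.mul_eq_of_overlap h₁ (h := 1 - f) (k := 1 - f) hmul₁
    (by linear_combination (1 - f) * he₁) (fun _ => rfl) x y
  have hf : f * f + f * (1 - f) = f := by ring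
  have hf' : (1 - f) * f + (1 - f) * (1 - f) = 1 - f := by ring
  calc glue φ₀ φ₁ f (x * y)
      = φ₀ ((f * f + f * (1 - f)) • (x * y))
        + φ₁ (((1 - f) * f + (1 - f) * (1 - f)) • (x * y)) := by rw [hf, hf', glue_apply]
    _ = glue φ₀ φ₁ f x * glue φ₀ φ₁ f y := by
      simp only [glue_apply, add_mul, mul_add, h00, h01, h10, h11, add_smul, map_add]
      abel

end BimoduleMap

section ColumnConj

variable {𝕜 K S E n : Type*} [CommSemiring 𝕜] [Ring E] [StarRing E] [Algebra 𝕜 E]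

variable (𝕜) in
/-- Conjugation `a ↦ p a p*` by a column `p` over `E`, with values in the square matrices. -/
def columnConj (p : n → E) : E →ₗ[𝕜] Matrix n n E where
  toFun a := Matrix.of fun i j => p i * a * star (p j)
  map_add' a b := by ext; simp [mul_add, add_mul]
  map_smul' z a := by ext; simp

theorem columnConj_apply (p : n → E) (a : E) (i j : n) :
    columnConj 𝕜 p a i j = p i * a * star (p j) := rfl

theorem columnConj_star (p : n → E) (a : E) :
    columnConj 𝕜 p (star a) = star (columnConj 𝕜 p a) := by
  ext
  simp [columnConj_apply, Matrix.star_apply, mul_assoc]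

variable [Fintype n]

theorem columnConj_mul (p : n → E) (a b : E) :
    columnConj 𝕜 p a * columnConj 𝕜 p b
      = columnConj 𝕜 p (a * (∑ k, star (p k) * p k) * b) := by
  ext
  simp only [Matrix.mul_apply, columnConj_apply, Finset.mul_sum, Finset.sum_mul, mul_assoc]

variable [CommRing K] [StarRing K] [Algebra 𝕜 K] [NonUnitalNonAssocSemiring S]
  [StarRing S] [Module 𝕜 S] [Module K S] {θ : K →⋆ₐ[𝕜] E} {ν : S →⋆ₙₐ[𝕜] E} {p : n → E}

theorem columnConj_map_mul [SMulCommClass K S S] (hν : IsBimoduleMap θ ν) {e : K}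
    (hp : ∑ k, star (p k) * p k = θ e) (x y : S) :
    columnConj 𝕜 p (ν x) * columnConj 𝕜 p (ν y) = columnConj 𝕜 p (ν (e • (x * y))) := by
  rw [columnConj_mul, hp, mul_assoc, ← (hν e y).1, ← map_mul, mul_smul_comm]

theorem isBimoduleMap_columnConj [DecidableEq n] [StarModule K S]
    (hp : ∀ (h : K) (x : S) (i : n), θ h * (p i * ν x) = p i * ν (h • x)) :
    IsBimoduleMap (fun h => Matrix.diagonal fun _ : n => θ h)
      (fun x => columnConj 𝕜 p (ν x)) := by
  refine .of_left (fun h => ?_) (fun x => ?_) (fun h x => ?_)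
  · simp only [map_star, Matrix.star_eq_conjTranspose, Matrix.diagonal_conjTranspose]
    rfl
  · rw [map_star, columnConj_star]
  · ext i j
    rw [Matrix.diagonal_mul, columnConj_apply, columnConj_apply, ← hp, mul_assoc]

end ColumnConj

/-- Self-adjoint elements of a commutative *-ring that behave like cutoff functions on an interval:
`left`, `mid` and `right` have squares summing to `1`, and `switch` passes from `1` to `0` inside
the region where `left` and `right` both vanish. -/
structure CutoffSystem (K : Type*) [CommRing K] [StarRing K] where
  left : K
  mid : K
  right : K
  switch : K
  isSelfAdjoint_left : IsSelfAdjoint left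
  isSelfAdjoint_mid : IsSelfAdjoint mid
  isSelfAdjoint_right : IsSelfAdjoint right
  isSelfAdjoint_switch : IsSelfAdjoint switch
  sum_sq : left * left + mid * mid + right * right = 1
  left_mul_switch : left * switch = left
  right_mul_switch : right * switch = 0

section Patching

variable {𝕜 K S E : Type*} [CommSemiring 𝕜] [CommRing K] [StarRing K] [Algebra 𝕜 K]
  [NonUnitalNonAssocSemiring S] [StarRing S] [Module 𝕜 S] [Module K S] [Ring E] [StarRing E]
  [Algebra 𝕜 E] {θ : K →⋆ₐ[𝕜] E} {ν₀ ν₁ : S →⋆ₙₐ[𝕜] E} {v : E} {C : CutoffSystem K}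

theorem star_mul_eq_mul_star_of_conj_eq {a b : E} (hv : v ∈ unitary E)
    (hab : v * a * star v = b) : star v * b = a * star v := by
  rw [← hab, mul_assoc, ← mul_assoc (star v), Unitary.star_mul_self_of_mem hv, one_mul]

/-- The column `(θ(c), θ(d))` that carries `ν₀` into `M₂(E)`. -/
def leftColumn (θ : K →⋆ₐ[𝕜] E) (C : CutoffSystem K) : Fin 2 → E :=
  ![θ C.left, θ C.mid]

/-- The column `(θ(s), v*θ(d))` that carries `ν₁` into `M₂(E)`. -/
def rightColumn (θ : K →⋆ₐ[𝕜] E) (v : E) (C : CutoffSystem K) : Fin 2 → E :=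
  ![θ C.right, star v * θ C.mid]

theorem sum_star_mul_leftColumn (θ : K →⋆ₐ[𝕜] E) (C : CutoffSystem K) :
    ∑ k, star (leftColumn θ C k) * leftColumn θ C k
      = θ (C.left * C.left + C.mid * C.mid) := by
  simp [leftColumn, ← map_star, C.isSelfAdjoint_left.star_eq, C.isSelfAdjoint_mid.star_eq]

theorem sum_star_mul_rightColumn (θ : K →⋆ₐ[𝕜] E) (hv : v ∈ unitary E) (C : CutoffSystem K) :
    ∑ k, star (rightColumn θ v C k) * rightColumn θ v C k
      = θ (C.right * C.right + C.mid * C.mid) := by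
  have hmid : θ C.mid * v * (star v * θ C.mid) = θ C.mid * θ C.mid := by
    rw [mul_assoc, ← mul_assoc v, Unitary.mul_star_self_of_mem hv, one_mul]
  simp [rightColumn, ← map_star, C.isSelfAdjoint_right.star_eq, C.isSelfAdjoint_mid.star_eq, hmid]

theorem columnConj_leftColumn (hν₀ : IsBimoduleMap θ ν₀) (x : S) :
    columnConj 𝕜 (leftColumn θ C) (ν₀ x)
      = !![ν₀ ((C.left * C.left) • x), ν₀ ((C.left * C.mid) • x);
           ν₀ ((C.left * C.mid) • x), ν₀ ((C.mid * C.mid) • x)] := by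
  ext i j
  fin_cases i <;> fin_cases j <;>
    simp [columnConj_apply, leftColumn, ← map_star, C.isSelfAdjoint_left.star_eq,
      C.isSelfAdjoint_mid.star_eq, hν₀.mul_map_mul, mul_comm C.mid C.left]

theorem columnConj_rightColumn (hν₁ : IsBimoduleMap θ ν₁) (hv : v ∈ unitary E)
    (hconj : ∀ x, v * ν₀ (C.mid • x) * star v = ν₁ (C.mid • x)) (x : S) :
    columnConj 𝕜 (rightColumn θ v C) (ν₁ x)
      = !![ν₁ ((C.right * C.right) • x), ν₁ ((C.right * C.mid) • x) * v;
           star v * ν₁ ((C.right * C.mid) • x), ν₀ ((C.mid * C.mid) • x)] := by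
  have hmul_v (h k : K) : θ h * ν₁ x * (θ k * v) = ν₁ ((h * k) • x) * v := by
    rw [← mul_assoc, hν₁.mul_map_mul]
  have hmid : star v * (ν₁ ((C.mid * C.mid) • x) * v) = ν₀ ((C.mid * C.mid) • x) := by
    rw [mul_smul, ← mul_assoc, star_mul_eq_mul_star_of_conj_eq hv (hconj _), mul_assoc,
      Unitary.star_mul_self_of_mem hv, mul_one]
  ext i j
  fin_cases i <;> fin_cases j <;>
    simp [columnConj_apply, rightColumn, ← map_star, C.isSelfAdjoint_right.star_eq,
      C.isSelfAdjoint_mid.star_eq, hν₁.mul_map_mul, hmul_v, hmid, mul_assoc (star v),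
      mul_comm C.mid C.right]

theorem isBimoduleMap_columnConj_leftColumn [StarModule K S] (hν₀ : IsBimoduleMap θ ν₀) :
    IsBimoduleMap (fun h => Matrix.diagonal fun _ : Fin 2 => θ h)
      (fun x => columnConj 𝕜 (leftColumn θ C) (ν₀ x)) :=
  isBimoduleMap_columnConj fun h x =>
    Fin.forall_fin_two.2 ⟨hν₀.mul_mul_map h C.left x, hν₀.mul_mul_map h C.mid x⟩

theorem isBimoduleMap_columnConj_rightColumn [StarModule K S] (hν₀ : IsBimoduleMap θ ν₀)
    (hν₁ : IsBimoduleMap θ ν₁) (hv : v ∈ unitary E)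
    (hconj : ∀ x, v * ν₀ (C.mid • x) * star v = ν₁ (C.mid • x)) :
    IsBimoduleMap (fun h => Matrix.diagonal fun _ : Fin 2 => θ h)
      (fun x => columnConj 𝕜 (rightColumn θ v C) (ν₁ x)) := by
  -- `v` need not commute with `θ h`, so pass to `ν₀`, on the other side of `star v`.
  have hmid (x : S) : star v * θ C.mid * ν₁ x = ν₀ (C.mid • x) * star v := by
    rw [mul_assoc, ← (hν₁ _ _).1, star_mul_eq_mul_star_of_conj_eq hv (hconj x)]
  have hmid_comm (h : K) (x : S) :
      θ h * (star v * θ C.mid * ν₁ x) = star v * θ C.mid * ν₁ (h • x) := by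
    rw [hmid, hmid, ← mul_assoc, ← (hν₀ h _).1, smul_comm]
  exact isBimoduleMap_columnConj fun h x =>
    Fin.forall_fin_two.2 ⟨hν₁.mul_mul_map h C.right x, hmid_comm h x⟩

theorem columnConj_leftColumn_eq_rightColumn (hν₀ : IsBimoduleMap θ ν₀) (hν₁ : IsBimoduleMap θ ν₁)
    (hv : v ∈ unitary E) (hconj : ∀ x, v * ν₀ (C.mid • x) * star v = ν₁ (C.mid • x)) (x : S) :
    columnConj 𝕜 (leftColumn θ C) (ν₀ ((C.switch * (1 - C.switch)) • x))
      = columnConj 𝕜 (rightColumn θ v C) (ν₁ ((C.switch * (1 - C.switch)) • x)) := by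
  have hleft (k : K) : C.left * k * (C.switch * (1 - C.switch)) = 0 := by
    linear_combination (-k * C.switch) * C.left_mul_switch
  have hright (k : K) : C.right * k * (C.switch * (1 - C.switch)) = 0 := by
    linear_combination (k * (1 - C.switch)) * C.right_mul_switch
  simp only [columnConj_leftColumn hν₀, columnConj_rightColumn hν₁ hv hconj, smul_smul, hleft,
    hright, zero_smul, map_zero, zero_mul, mul_zero]

/-- The matrix-valued map obtained by gluing `ν₀`, carried by `leftColumn`, to `ν₁`, carried by
`rightColumn`. -/
def patch [SMulCommClass K 𝕜 S] (θ : K →⋆ₐ[𝕜] E) (ν₀ ν₁ : S →⋆ₙₐ[𝕜] E) (v : E)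
    (C : CutoffSystem K) : S →ₗ[𝕜] Matrix (Fin 2) (Fin 2) E :=
  glue (columnConj 𝕜 (leftColumn θ C) ∘ₗ (ν₀ : S →ₗ[𝕜] E))
    (columnConj 𝕜 (rightColumn θ v C) ∘ₗ (ν₁ : S →ₗ[𝕜] E)) C.switch

variable [SMulCommClass K 𝕜 S]

theorem patch_apply (hν₀ : IsBimoduleMap θ ν₀) (hν₁ : IsBimoduleMap θ ν₁) (hv : v ∈ unitary E)
    (hconj : ∀ x, v * ν₀ (C.mid • x) * star v = ν₁ (C.mid • x)) (x : S) :
    patch θ ν₀ ν₁ v C x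
      = !![ν₀ ((C.left * C.left) • x) + ν₁ ((C.right * C.right) • x),
           ν₀ ((C.left * C.mid) • x) + ν₁ ((C.right * C.mid) • x) * v;
           ν₀ ((C.left * C.mid) • x) + star v * ν₁ ((C.right * C.mid) • x),
           ν₀ ((C.mid * C.mid) • x)] := by
  have hleft (k : K) : C.left * k * C.switch = C.left * k := by
    linear_combination k * C.left_mul_switch
  have hright (k : K) : C.right * k * (1 - C.switch) = C.right * k := by
    linear_combination -k * C.right_mul_switch
  have hmid : ν₀ ((C.mid * C.mid * C.switch) • x) + ν₀ ((C.mid * C.mid * (1 - C.switch)) • x)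
      = ν₀ ((C.mid * C.mid) • x) := by
    rw [← map_add, ← add_smul]
    ring_nf
  change columnConj 𝕜 _ (ν₀ (C.switch • x)) + columnConj 𝕜 _ (ν₁ ((1 - C.switch) • x)) = _
  simp only [columnConj_leftColumn hν₀, columnConj_rightColumn hν₁ hv hconj, smul_smul, hleft,
    hright, ← hmid]
  ext i j
  fin_cases i <;> fin_cases j <;> rfl

theorem patch_eq_of_mid_right_smul_eq_zero (hν₀ : IsBimoduleMap θ ν₀) (hν₁ : IsBimoduleMap θ ν₁)
    (hv : v ∈ unitary E) (hconj : ∀ x, v * ν₀ (C.mid • x) * star v = ν₁ (C.mid • x)) {x : S}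
    (hmid : C.mid • x = 0) (hright : C.right • x = 0) :
    patch θ ν₀ ν₁ v C x = !![ν₀ x, 0; 0, 0] := by
  have hleft : (C.left * C.left) • x = x := by
    simpa [add_smul, mul_smul, hmid, hright] using congrArg (· • x) C.sum_sq
  rw [patch_apply hν₀ hν₁ hv hconj, hleft]
  simp [mul_smul, hmid, hright]

theorem patch_eq_of_left_mid_smul_eq_zero (hν₀ : IsBimoduleMap θ ν₀) (hν₁ : IsBimoduleMap θ ν₁)
    (hv : v ∈ unitary E) (hconj : ∀ x, v * ν₀ (C.mid • x) * star v = ν₁ (C.mid • x)) {x : S}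
    (hleft : C.left • x = 0) (hmid : C.mid • x = 0) :
    patch θ ν₀ ν₁ v C x = !![ν₁ x, 0; 0, 0] := by
  have hright : (C.right * C.right) • x = x := by
    simpa [add_smul, mul_smul, hleft, hmid] using congrArg (· • x) C.sum_sq
  rw [patch_apply hν₀ hν₁ hv hconj, hright]
  simp [mul_smul, hleft, hmid, mul_comm C.left C.mid]

theorem trace_patch {M : Type*} [AddCommMonoid M] [Module 𝕜 M] (hν₀ : IsBimoduleMap θ ν₀)
    (hν₁ : IsBimoduleMap θ ν₁) (hv : v ∈ unitary E)
    (hconj : ∀ x, v * ν₀ (C.mid • x) * star v = ν₁ (C.mid • x)) (τ : E →ₗ[𝕜] M)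
    (hτ : ∀ x, τ (ν₀ x) = τ (ν₁ x)) (x : S) :
    τ (patch θ ν₀ ν₁ v C x 0 0) + τ (patch θ ν₀ ν₁ v C x 1 1) = τ (ν₀ x) := by
  rw [patch_apply hν₀ hν₁ hv hconj]
  calc τ (ν₀ ((C.left * C.left) • x) + ν₁ ((C.right * C.right) • x))
        + τ (ν₀ ((C.mid * C.mid) • x))
      = τ (ν₀ ((C.left * C.left + C.mid * C.mid + C.right * C.right) • x)) := by
        simp only [add_smul, map_add, hτ]
        exact add_right_comm _ _ _
    _ = τ (ν₀ x) := by rw [C.sum_sq, one_smul]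

theorem patch_star [StarModule K S] (x : S) :
    patch θ ν₀ ν₁ v C (star x) = star (patch θ ν₀ ν₁ v C x) :=
  glue_star (fun x => by simp [columnConj_star, map_star])
    (fun x => by simp [columnConj_star, map_star]) C.isSelfAdjoint_switch x

theorem isBimoduleMap_patch [StarModule K S] (hν₀ : IsBimoduleMap θ ν₀)
    (hν₁ : IsBimoduleMap θ ν₁) (hv : v ∈ unitary E)
    (hconj : ∀ x, v * ν₀ (C.mid • x) * star v = ν₁ (C.mid • x)) :
    IsBimoduleMap (fun h => Matrix.diagonal fun _ => θ h) (patch θ ν₀ ν₁ v C) :=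
  isBimoduleMap_glue (isBimoduleMap_columnConj_leftColumn hν₀)
    (isBimoduleMap_columnConj_rightColumn hν₀ hν₁ hv hconj) _

variable [SMulCommClass K S S] [StarModule K S]

theorem patch_mul (hν₀ : IsBimoduleMap θ ν₀) (hν₁ : IsBimoduleMap θ ν₁) (hv : v ∈ unitary E)
    (hconj : ∀ x, v * ν₀ (C.mid • x) * star v = ν₁ (C.mid • x)) (x y : S) :
    patch θ ν₀ ν₁ v C (x * y) = patch θ ν₀ ν₁ v C x * patch θ ν₀ ν₁ v C y := by
  refine glue_mul (isBimoduleMap_columnConj_leftColumn hν₀)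
    (isBimoduleMap_columnConj_rightColumn hν₀ hν₁ hv hconj)
    (columnConj_map_mul hν₀ (sum_star_mul_leftColumn θ C))
    (columnConj_map_mul hν₁ (sum_star_mul_rightColumn θ hv C)) ?_ ?_
    (columnConj_leftColumn_eq_rightColumn hν₀ hν₁ hv hconj) x y
  · linear_combination C.switch * C.sum_sq - C.right * C.right_mul_switch
  · linear_combination (1 - C.switch) * C.sum_sq + C.left * C.left_mul_switch

/-- `patch` as a *-homomorphism. -/
def patchHom (hν₀ : IsBimoduleMap θ ν₀) (hν₁ : IsBimoduleMap θ ν₁) (hv : v ∈ unitary E)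
    (hconj : ∀ x, v * ν₀ (C.mid • x) * star v = ν₁ (C.mid • x)) :
    S →⋆ₙₐ[𝕜] Matrix (Fin 2) (Fin 2) E where
  toFun := patch θ ν₀ ν₁ v C
  map_smul' := map_smul _
  map_zero' := map_zero _
  map_add' := map_add _
  map_mul' := patch_mul hν₀ hν₁ hv hconj
  map_star' := patch_star

end Patching

section Suspension

variable {A : Type} [CStarAlgebra A]

instance : SMul C(I, ℂ) (susp A) := ⟨hsmul⟩

theorem susp_smul_apply (h : C(I, ℂ)) (x : susp A) (t : I) :
    (h • x : susp A).1 t = h t • x.1 t := rfl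

instance : Module C(I, ℂ) (susp A) :=
  Subtype.val_injective.module C(I, ℂ)
    { toFun := Subtype.val, map_zero' := rfl, map_add' := fun _ _ => rfl } fun _ _ => rfl

instance : SMulCommClass C(I, ℂ) ℂ (susp A) :=
  ⟨fun h z x => Subtype.ext (ContinuousMap.ext fun t => smul_comm (h t) z (x.1 t))⟩

instance : SMulCommClass C(I, ℂ) (susp A) (susp A) :=
  ⟨fun h x y => Subtype.ext (ContinuousMap.ext fun t =>
    (mul_smul_comm (h t) (x.1 t) (y.1 t)).symm)⟩

instance : StarModule C(I, ℂ) (susp A) :=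
  ⟨fun h x => Subtype.ext (ContinuousMap.ext fun t => star_smul (h t) (x.1 t))⟩

theorem susp_smul_eq_zero {h : C(I, ℂ)} {x : susp A} (hx : ∀ t, h t = 0 ∨ x.1 t = 0) :
    h • x = 0 :=
  Subtype.ext (ContinuousMap.ext fun t => smul_eq_zero.2 (hx t))

end Suspension

section ThirdsCutoffs

theorem isSelfAdjoint_ofRealCM (f : C(I, ℝ)) : IsSelfAdjoint (ofRealCM f) :=
  ContinuousMap.ext fun t => Complex.conj_ofReal (f t)

/-- A ramp on `[0,1]` that is `0` up to `k/9` and `1` from `(k+1)/9` on. -/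
def ninthRamp (k : ℝ) : C(I, ℝ) where
  toFun t := Real.smoothTransition (9 * t - k)
  continuous_toFun := Real.smoothTransition.continuous.comp (by fun_prop)

theorem ninthRamp_nonneg (k : ℝ) (t : I) : 0 ≤ ninthRamp k t :=
  Real.smoothTransition.nonneg _

theorem ninthRamp_le_one (k : ℝ) (t : I) : ninthRamp k t ≤ 1 :=
  Real.smoothTransition.le_one _

theorem ninthRamp_eq_zero {k : ℝ} {t : I} (h : (t : ℝ) ≤ k / 9) : ninthRamp k t = 0 :=
  Real.smoothTransition.zero_of_nonpos (by linarith)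

theorem ninthRamp_eq_one {k : ℝ} {t : I} (h : (k + 1) / 9 ≤ (t : ℝ)) : ninthRamp k t = 1 :=
  Real.smoothTransition.one_of_one_le (by linarith)

theorem ninthRamp_eq_one_or_eq_zero {k l : ℝ} (hkl : k + 1 ≤ l) (t : I) :
    ninthRamp k t = 1 ∨ ninthRamp l t = 0 := by
  rcases le_total ((k + 1) / 9) (t : ℝ) with h | h
  · exact .inl (ninthRamp_eq_one h)
  · exact .inr (ninthRamp_eq_zero (by linarith))

theorem ninthRamp_le_ninthRamp {k l : ℝ} (hkl : k + 1 ≤ l) (t : I) :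
    ninthRamp l t ≤ ninthRamp k t := by
  rcases ninthRamp_eq_one_or_eq_zero hkl t with h | h
  · exact h ▸ ninthRamp_le_one l t
  · exact h ▸ ninthRamp_nonneg k t

/-- The pointwise square root of a real function on `[0,1]` as a complex function; where the given
function is negative the value is `0`. -/
def sqrtCM (f : C(I, ℝ)) : C(I, ℂ) :=
  ofRealCM ⟨fun t => √(f t), by fun_prop⟩

theorem sqrtCM_apply (f : C(I, ℝ)) (t : I) : sqrtCM f t = (√(f t) : ℝ) := rfl

theorem sqrtCM_mul_self {f : C(I, ℝ)} (hf : ∀ t, 0 ≤ f t) :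
    sqrtCM f * sqrtCM f = ofRealCM f := by
  ext t
  exact (Complex.ofReal_mul _ _).symm.trans (congrArg Complex.ofReal (Real.mul_self_sqrt (hf t)))

/-- Cutoffs on `[0,1]` whose middle function is supported in the middle third. In the units of
`ninthRamp`, `left` falls over the fourth ninth, `switch` over the fifth, and `right` rises over the
sixth. -/
def thirdsCutoffs : CutoffSystem C(I, ℂ) where
  left := sqrtCM (1 - ninthRamp 3)
  mid := sqrtCM (ninthRamp 3 - ninthRamp 5)
  right := sqrtCM (ninthRamp 5)
  switch := ofRealCM (1 - ninthRamp 4)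
  isSelfAdjoint_left := isSelfAdjoint_ofRealCM _
  isSelfAdjoint_mid := isSelfAdjoint_ofRealCM _
  isSelfAdjoint_right := isSelfAdjoint_ofRealCM _
  isSelfAdjoint_switch := isSelfAdjoint_ofRealCM _
  sum_sq := by
    rw [sqrtCM_mul_self fun t => sub_nonneg.2 (ninthRamp_le_one 3 t),
      sqrtCM_mul_self fun t => sub_nonneg.2 (ninthRamp_le_ninthRamp (by norm_num) t),
      sqrtCM_mul_self (ninthRamp_nonneg 5)]
    ext t
    simp [ofRealCM]
  left_mul_switch := by
    ext t
    rcases ninthRamp_eq_one_or_eq_zero (k := 3) (l := 4) (by norm_num) t with h | h <;>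
      simp [sqrtCM_apply, ofRealCM, h]
  right_mul_switch := by
    ext t
    rcases ninthRamp_eq_one_or_eq_zero (k := 4) (l := 5) (by norm_num) t with h | h <;>
      simp [sqrtCM_apply, ofRealCM, h]

theorem thirdsCutoffs_left_eq_zero {t : I} (ht : 2 / 3 ≤ (t : ℝ)) : thirdsCutoffs.left t = 0 := by
  simp [thirdsCutoffs, sqrtCM_apply, ninthRamp_eq_one (k := 3) (t := t) (by linarith)]

theorem thirdsCutoffs_right_eq_zero {t : I} (ht : (t : ℝ) ≤ 1 / 3) :
    thirdsCutoffs.right t = 0 := by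
  simp [thirdsCutoffs, sqrtCM_apply, ninthRamp_eq_zero (k := 5) (t := t) (by linarith)]

theorem thirdsCutoffs_mid_eq_zero {t : I} (ht : (t : ℝ) ∉ Set.Ioo (1 / 3 : ℝ) (2 / 3)) :
    thirdsCutoffs.mid t = 0 := by
  rcases le_or_gt (t : ℝ) (1 / 3) with h | h
  · simp [thirdsCutoffs, sqrtCM_apply, ninthRamp_eq_zero (k := 3) (t := t) (by linarith),
      ninthRamp_eq_zero (k := 5) (t := t) (by linarith)]
  · have h' : 2 / 3 ≤ (t : ℝ) := not_lt.1 fun hlt => ht ⟨h, hlt⟩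
    simp [thirdsCutoffs, sqrtCM_apply, ninthRamp_eq_one (k := 3) (t := t) (by linarith),
      ninthRamp_eq_one (k := 5) (t := t) (by linarith)]

end ThirdsCutoffs

theorem exact_patching_general {A : Type} {E : Type*} [CStarAlgebra A] [Ring E] [StarRing E]
    [Algebra ℂ E] (θ : C(I, ℂ) →⋆ₐ[ℂ] E) (ν₀ ν₁ : susp A →⋆ₙₐ[ℂ] E)
    (hν₀ : IsBimoduleMap θ ν₀) (hν₁ : IsBimoduleMap θ ν₁) (v : E) (hv : v ∈ unitary E)
    (hmid : ∀ x : susp A,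
      (∀ t : I, (t : ℝ) ∉ Set.Ioo (1/3 : ℝ) (2/3) → (x : C(I, A)) t = 0) →
      v * ν₀ x * star v = ν₁ x) :
    ∃ ρ : susp A →⋆ₙₐ[ℂ] Matrix (Fin 2) (Fin 2) E,
      (∀ x : susp A,
        (∀ t : I, (t : ℝ) ∉ Set.Ioo (0 : ℝ) (1/3) → (x : C(I, A)) t = 0) →
        ρ x = !![ν₀ x, 0; 0, 0]) ∧
      (∀ x : susp A,
        (∀ t : I, (t : ℝ) ∉ Set.Ioo (2/3 : ℝ) 1 → (x : C(I, A)) t = 0) →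
        ρ x = !![ν₁ x, 0; 0, 0]) ∧
      (∀ τ : E →ₗ[ℂ] ℂ, (∀ x : susp A, τ (ν₀ x) = τ (ν₁ x)) →
        ∀ x : susp A, τ (ρ x 0 0) + τ (ρ x 1 1) = τ (ν₀ x)) ∧
      IsBimoduleMap (fun h => Matrix.diagonal fun _ => θ h) ρ := by
  have hconj (x : susp A) :
      v * ν₀ (thirdsCutoffs.mid • x) * star v = ν₁ (thirdsCutoffs.mid • x) :=
    hmid _ fun t ht => by rw [susp_smul_apply, thirdsCutoffs_mid_eq_zero ht, zero_smul]
  refine ⟨patchHom (S := susp A) hν₀ hν₁ hv hconj, fun x hx => ?_, fun x hx => ?_, ?_, ?_⟩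
  · have hx' (t : I) (ht : 1 / 3 < (t : ℝ)) : x.1 t = 0 := hx t fun h => ht.not_gt h.2
    refine patch_eq_of_mid_right_smul_eq_zero hν₀ hν₁ hv hconj
      (susp_smul_eq_zero fun t => ?_) (susp_smul_eq_zero fun t => ?_)
    · exact (le_or_gt _ _).imp (fun ht => thirdsCutoffs_mid_eq_zero fun h => ht.not_gt h.1) (hx' t)
    · exact (le_or_gt _ _).imp thirdsCutoffs_right_eq_zero (hx' t)
  · have hx' (t : I) (ht : (t : ℝ) < 2 / 3) : x.1 t = 0 := hx t fun h => ht.not_gt h.1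
    refine patch_eq_of_left_mid_smul_eq_zero hν₀ hν₁ hv hconj
      (susp_smul_eq_zero fun t => ?_) (susp_smul_eq_zero fun t => ?_)
    · exact (le_or_gt _ _).imp thirdsCutoffs_left_eq_zero (hx' t)
    · exact (le_or_gt _ _).imp (fun ht => thirdsCutoffs_mid_eq_zero fun h => ht.not_gt h.2) (hx' t)
  · exact trace_patch (S := susp A) hν₀ hν₁ hv hconj
  · exact isBimoduleMap_patch hν₀ hν₁ hv hconj

/-- **Exact patching.** If `ν₀` and `ν₁` are `θ`-compatible *-homomorphisms
`C₀((0,1),A) → E` which are exactly conjugate by a unitary `v` over the middle third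
`(1/3,2/3)`, then they can be patched to a single *-homomorphism `ρ : C₀((0,1),A) → M₂(E)`
recovering `ν₀` on `(0,1/3)` and `ν₁` on `(2/3,1)`, preserving traces (up to the factor coming
from `Tr₂`), and compatible with `θ^{⊕2}`. -/
theorem exact_patching {A E : Type} [CStarAlgebra A] [CStarAlgebra E]
    (θ : C(I, ℂ) →⋆ₐ[ℂ] E) (ν₀ ν₁ : susp A →⋆ₙₐ[ℂ] E)
    (hν₀ : Compatible θ ν₀) (hν₁ : Compatible θ ν₁)
    (v : E) (hv : v ∈ unitary E)
    (hmid : ∀ x : susp A,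
      (∀ t : I, (t : ℝ) ∉ Set.Ioo (1/3 : ℝ) (2/3) → (x : C(I, A)) t = 0) →
      v * ν₀ x * star v = ν₁ x) :
    ∃ ρ : susp A →⋆ₙₐ[ℂ] Matrix (Fin 2) (Fin 2) E,
      (∀ x : susp A,
        (∀ t : I, (t : ℝ) ∉ Set.Ioo (0 : ℝ) (1/3) → (x : C(I, A)) t = 0) →
        ρ x = !![ν₀ x, 0; 0, 0]) ∧
      (∀ x : susp A,
        (∀ t : I, (t : ℝ) ∉ Set.Ioo (2/3 : ℝ) 1 → (x : C(I, A)) t = 0) →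
        ρ x = !![ν₁ x, 0; 0, 0]) ∧
      (∀ τ : E →L[ℂ] ℂ, IsTracialState τ → (∀ x : susp A, τ (ν₀ x) = τ (ν₁ x)) →
        ∀ x : susp A, τ (ρ x 0 0) + τ (ρ x 1 1) = τ (ν₀ x)) ∧
      (∀ (h : C(I, ℂ)) (x : susp A),
        ρ (hsmul h x) = Matrix.diagonal (fun _ => θ h) * ρ x ∧
        ρ (hsmul h x) = ρ x * Matrix.diagonal (fun _ => θ h)) := by
  obtain ⟨ρ, hleft, hright, htrace, hθ⟩ := exact_patching_general θ ν₀ ν₁ hν₀ hν₁ v hv hmid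
  exact ⟨ρ, hleft, hright, fun τ _ => htrace τ, hθ⟩
end
end
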